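/- arXiv:2403.11470 — 2 statements merged into one kernel-verified Lean document; each statement's English description precedes it below -/
import Mathlib

section
/- If H is a spanning subgraph of a contractibly orderable graph, then every graph with no H⁺-minor is (|V(H⁺)|−1)-list-colorable, i.e., for every assignment of a list of at least |V(H⁺)|−1 colors to each vertex there is a proper coloring choosing each vertex's color from its list. -/
open SimpleGraph

section Defs

variable {V W : Type*}

/-- An `H`-minor in `G` given by branch sets `μ`: the branch sets are pairwise disjoint,
each induces a connected subgraph of `G`, and every edge of `H` is realized by an edge of `G`
between the corresponding branch sets. -/
def IsMinorMap (G : SimpleGraph V) (H : SimpleGraph W) (μ : W → Set V) : Prop :=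
  (∀ w, (G.induce (μ w)).Connected) ∧
  (Pairwise fun w₁ w₂ => Disjoint (μ w₁) (μ w₂)) ∧
  (∀ ⦃w₁ w₂⦄, H.Adj w₁ w₂ → ∃ a ∈ μ w₁, ∃ b ∈ μ w₂, G.Adj a b)

/-- The apex graph `H⁺`: a new vertex (`none`) joined to every vertex of `H`. -/
def apexGraph (H : SimpleGraph W) : SimpleGraph (Option W) :=
  SimpleGraph.fromRel fun a b =>
    a = none ∨ ∃ u v, a = some u ∧ b = some v ∧ H.Adj u v

/-- The set `ω_{[s]}` of the first `s` vertices of the ordering `ω`. -/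
def prevSet {t : ℕ} (ω : Fin t ≃ V) (s : ℕ) : Set V := ω '' {i | (i : ℕ) < s}

/-- The neighbours of the vertex `ω s` among the earlier vertices `ω_{[s]}`. -/
def nbrs (H : SimpleGraph V) {t : ℕ} (ω : Fin t ≃ V) (s : Fin t) : Set V :=
  {v | v ∈ prevSet ω (s : ℕ) ∧ H.Adj (ω s) v}

/-- A recursive ordering: every vertex has at most two neighbours among the earlier
vertices, and if it has exactly two then those two are adjacent. -/
def IsRecursiveOrdering (H : SimpleGraph V) {t : ℕ} (ω : Fin t ≃ V) : Prop :=
  ∀ s : Fin t, (nbrs H ω s).ncard ≤ 2 ∧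
    ∀ a ∈ nbrs H ω s, ∀ b ∈ nbrs H ω s, a ≠ b → H.Adj a b

/-- The graph `H[S]/ab` obtained from the induced subgraph on `S` by contracting the
edge `ab` (the vertex `b` is merged into `a`). -/
def contractOn (H : SimpleGraph V) (S : Set V) (a b : V) :
    SimpleGraph ↥(S \ {b}) :=
  SimpleGraph.fromRel fun x y =>
    H.Adj (x : V) (y : V) ∨ ((x : V) = a ∧ H.Adj b (y : V)) ∨
      ((y : V) = a ∧ H.Adj (x : V) b)

variable [Fintype V]

/-- A contractible ordering of `H`. -/
def IsContractibleOrdering (H : SimpleGraph V)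
    (Ω : Set (Fin (Fintype.card V) ≃ V)) : Prop :=
  Ω.Nonempty ∧ (∀ ω ∈ Ω, IsRecursiveOrdering H ω) ∧
    ∀ ω ∈ Ω, ∀ s : Fin (Fintype.card V), ∀ a ∈ nbrs H ω s, ∀ b ∈ nbrs H ω s, a ≠ b →
      ∃ ω' ∈ Ω,
        Nonempty ((H.induce (prevSet ω' ((s : ℕ) - 1))) ≃g
          contractOn H (prevSet ω (s : ℕ)) a b)

/-- A graph is contractibly orderable if it admits a contractible ordering. -/
def ContractiblyOrderable (H : SimpleGraph V) : Prop :=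
  ∃ Ω, IsContractibleOrdering H Ω

end Defs

section Aux

universe u v w

/-- The boundary of `Z` in the graph obtained from `G[C]` by adding the contracted
branch sets `μ i`. -/
def bd {W : Type u} {ι : Type v} (G : SimpleGraph W) (C : Set W) (μ : ι → Set W) (Z : Set W) :
    Set (ι ⊕ W) :=
  {x | ∃ z ∈ Z, Sum.elim (fun i => ∃ a ∈ μ i, G.Adj a z)
    (fun y => y ∈ C ∧ y ∉ Z ∧ G.Adj y z) x}

lemma inl_mem_bd {W : Type u} {ι : Type v} {G : SimpleGraph W} {C : Set W} {μ : ι → Set W}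
    {Z : Set W} {i : ι} : Sum.inl i ∈ bd G C μ Z ↔ ∃ z ∈ Z, ∃ a ∈ μ i, G.Adj a z := Iff.rfl

lemma inr_mem_bd {W : Type u} {ι : Type v} {G : SimpleGraph W} {C : Set W} {μ : ι → Set W}
    {Z : Set W} {y : W} :
    (Sum.inr y : ι ⊕ W) ∈ bd G C μ Z ↔ ∃ z ∈ Z, y ∈ C ∧ y ∉ Z ∧ G.Adj y z := Iff.rfl

lemma ncard_collapse_eq {α : Type u} {β : Type v} [Finite α] (f : α → β) (p q : α)
    (hf : ∀ x y, f x = f y → x = y ∨ (x = p ∧ y = q) ∨ (x = q ∧ y = p)) (S : Set α)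
    (h : ¬ (p ∈ S ∧ q ∈ S)) : (f '' S).ncard = S.ncard := by
  apply Set.InjOn.ncard_image
  intro x hx y hy hxy
  rcases hf x y hxy with h1 | ⟨rfl, rfl⟩ | ⟨rfl, rfl⟩
  · exact h1
  · exact absurd ⟨hx, hy⟩ h
  · exact absurd ⟨hy, hx⟩ h

lemma ncard_collapse_le {α : Type u} {β : Type v} [Finite α] [Finite β] (f : α → β) (p q : α)
    (hf : ∀ x y, f x = f y → x = y ∨ (x = p ∧ y = q) ∨ (x = q ∧ y = p)) (S : Set α) :
    S.ncard ≤ (f '' S).ncard + 1 := by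
  have h1 : (f '' (S \ {p})).ncard = (S \ {p}).ncard :=
    ncard_collapse_eq f p q hf _ (by simp)
  have h2 : (f '' (S \ {p})).ncard ≤ (f '' S).ncard :=
    Set.ncard_le_ncard (Set.image_mono Set.sdiff_subset) (Set.toFinite _)
  have h3 := Set.pred_ncard_le_ncard_sdiff_singleton S p
  omega

lemma union_connected_of_adj {W : Type u} {G : SimpleGraph W} {s t : Set W}
    (hs : (G.induce s).Connected) (ht : (G.induce t).Connected) {a b : W} (ha : a ∈ s)
    (hb : b ∈ t) (hab : G.Adj a b) : (G.induce (s ∪ t)).Connected := by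
  have h1 := induce_union_connected hs.preconnected
    (induce_pair_connected_of_adj hab).preconnected ⟨a, ha, by simp⟩
  have h2 := induce_union_connected h1.preconnected ht.preconnected ⟨b, by simp, hb⟩
  have : s ∪ {a, b} ∪ t = s ∪ t := by
    ext x; simp only [Set.mem_union, Set.mem_insert_iff, Set.mem_singleton_iff]
    constructor
    · rintro ((h | rfl | rfl) | h) <;> tauto
    · tauto
  rwa [this] at h2

/-- A model of `J` outside of `C`. -/
def Model {W : Type u} {ι : Type v} (G : SimpleGraph W) (J : SimpleGraph ι) (C : Set W)
    (μ : ι → Set W) : Prop := IsMinorMap G J μ ∧ ∀ i, Disjoint (μ i) C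

open Classical in
lemma linking {W : Type u} {ι : Type v} [Finite W] [Finite ι] (G : SimpleGraph W)
    (J : SimpleGraph ι) : ∀ (n : ℕ) (C X : Set W) (μ : ι → Set W), (C \ X).ncard = n →
    X ⊆ C → Model G J C μ → (bd G C μ X).ncard ≤ Nat.card ι →
    (∀ Z, X ⊆ Z → Z ⊆ C → Nat.card ι ≤ (bd G C μ Z).ncard) →
    ∃ μ' : ι → Set W, Model G J X μ' ∧
      ∀ Z ⊆ X, (bd G X μ' Z).ncard = (bd G C μ Z).ncard := by
  intro n
  induction n using Nat.strong_induction_on with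
  | _ n ih =>
  intro C X μ hn hXC hM hX hZ
  by_cases hall : ∀ i, Sum.inl i ∈ bd G C μ X
  · refine ⟨μ, ⟨hM.1, fun i => (hM.2 i).mono_right hXC⟩, ?_⟩
    have heq : Set.range (Sum.inl : ι → ι ⊕ W) = bd G C μ X := by
      apply Set.eq_of_subset_of_ncard_le
      · rintro _ ⟨i, rfl⟩; exact hall i
      · rw [← Set.image_univ, Set.ncard_image_of_injective _ Sum.inl_injective, Set.ncard_univ]
        exact hX
      · exact Set.toFinite _
    intro Z hZX
    congr 1
    ext x
    rcases x with i | y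
    · exact Iff.rfl
    · simp only [inr_mem_bd]
      constructor
      · rintro ⟨z, hz, hy, h⟩
        exact ⟨z, hz, hXC hy, h⟩
      · rintro ⟨z, hz, hy, hyZ, h⟩
        refine ⟨z, hz, ?_, hyZ, h⟩
        by_contra hyX
        have : (Sum.inr y : ι ⊕ W) ∈ bd G C μ X := inr_mem_bd.2 ⟨z, hZX hz, hy, hyX, h⟩
        rw [← heq] at this
        simp at this
  · push Not at hall
    obtain ⟨k, hk⟩ := hall
    have hkC : Sum.inl k ∈ bd G C μ C := by
      by_contra hkC
      have h1 : bd G C μ C ⊆ Sum.inl '' {i | i ≠ k} := by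
        rintro (i | y) hx
        · exact ⟨i, fun h => hkC (h ▸ hx), rfl⟩
        · obtain ⟨z, hz, h1, h2, -⟩ := inr_mem_bd.1 hx
          exact absurd h1 h2
      have h2 := Set.ncard_le_ncard h1 (Set.toFinite _)
      rw [Set.ncard_image_of_injective _ Sum.inl_injective] at h2
      have h3 : ({i | i ≠ k} : Set ι).ncard < (Set.univ : Set ι).ncard := by
        apply Set.ncard_lt_ncard _ (Set.toFinite _)
        rw [Set.ssubset_univ_iff]
        intro h
        have : k ∈ ({i | i ≠ k} : Set ι) := h ▸ Set.mem_univ k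
        exact this rfl
      rw [Set.ncard_univ] at h3
      have h4 := hZ C hXC le_rfl
      omega
    obtain ⟨y, hyC, x, hx, hxy⟩ := inl_mem_bd.1 hkC
    have hyX : y ∉ X := fun h => hk (inl_mem_bd.2 ⟨y, h, x, hx, hxy⟩)
    by_cases hbad : ∃ Z, X ⊆ Z ∧ Z ⊆ C \ {y} ∧ (bd G C μ Z).ncard ≤ Nat.card ι ∧
        Sum.inl k ∈ bd G C μ Z
    · obtain ⟨Z, hXZ, hZC, hZc, hkZ⟩ := hbad
      have hZC' : Z ⊆ C := hZC.trans Set.sdiff_subset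
      have hneZX : ¬ Z ⊆ X := fun h => hk (by
        have : Z = X := le_antisymm h hXZ
        rwa [this] at hkZ)
      obtain ⟨z, hzZ, hzX⟩ := Set.not_subset.1 hneZX
      have hlt1 : (C \ Z).ncard < n := by
        rw [← hn]
        apply Set.ncard_lt_ncard _ (Set.toFinite _)
        refine ⟨Set.sdiff_subset_sdiff_right hXZ, fun h => ?_⟩
        exact (h ⟨hZC' hzZ, hzX⟩).2 hzZ
      have hlt2 : (Z \ X).ncard < n := by
        rw [← hn]
        apply Set.ncard_lt_ncard _ (Set.toFinite _)
        refine ⟨Set.sdiff_subset_sdiff_left hZC', fun h => ?_⟩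
        exact (hZC (h ⟨hyC, hyX⟩).1).2 rfl
      obtain ⟨μ1, hM1, h1⟩ := ih _ hlt1 C Z μ rfl hZC' hM hZc
        (fun Z' hZ' hC' => hZ Z' (hXZ.trans hZ') hC')
      obtain ⟨μ2, hM2, h2⟩ := ih _ hlt2 Z X μ1 rfl hXZ hM1 (by rw [h1 X hXZ]; exact hX)
        (fun Z' hZ' hC' => by rw [h1 Z' hC']; exact hZ Z' hZ' (hC'.trans hZC'))
      refine ⟨μ2, hM2, fun Z' hZ' => ?_⟩
      rw [h2 Z' hZ', h1 Z' (hZ'.trans hXZ)]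
    · push Not at hbad
      set μ1 : ι → Set W := fun i => if i = k then μ k ∪ {y} else μ i with hμ1
      have hμ1k : μ1 k = μ k ∪ {y} := by simp [hμ1]
      have hμ1n : ∀ i, i ≠ k → μ1 i = μ i := fun i hi => by simp [hμ1, hi]
      have hsub : ∀ i, μ i ⊆ μ1 i := fun i => by
        by_cases h : i = k
        · subst h; rw [hμ1k]; exact Set.subset_union_left
        · rw [hμ1n i h]
      have hym : ∀ i, y ∉ μ i := fun i h => Set.disjoint_left.1 (hM.2 i) h hyC
      have hM1 : Model G J (C \ {y}) μ1 := by
        obtain ⟨⟨hc, hd, ha⟩, hdC⟩ := hM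
        refine ⟨⟨fun i => ?_, fun i j hij => ?_, fun i j hij => ?_⟩, fun i => ?_⟩
        · by_cases h : i = k
          · subst h; rw [hμ1k]
            refine union_connected_of_adj (hc i) ?_ hx rfl hxy
            have := induce_connected_of_patches (G := G) (s := {y}) y rfl (by
              intro v hv
              obtain rfl : v = y := hv
              exact ⟨{v}, le_rfl, rfl, rfl, Reachable.refl _⟩)
            exact this
          · rw [hμ1n i h]; exact hc i
        · have : Disjoint (μ i) (μ j) := hd hij
          show Disjoint (μ1 i) (μ1 j)
          by_cases h : i = k
          · have hj : j ≠ k := fun h' => hij (h.trans h'.symm)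
            subst h
            rw [hμ1k, hμ1n j hj, Set.disjoint_union_left]
            exact ⟨this, Set.disjoint_singleton_left.2 (hym j)⟩
          · by_cases h' : j = k
            · subst h'
              rw [hμ1k, hμ1n i h, Set.disjoint_union_right]
              exact ⟨this, Set.disjoint_singleton_right.2 (hym i)⟩
            · rw [hμ1n i h, hμ1n j h']; exact this
        · obtain ⟨a, ha', b, hb', hab⟩ := ha hij
          exact ⟨a, hsub i ha', b, hsub j hb', hab⟩
        · by_cases h : i = k
          · subst h; rw [hμ1k, Set.disjoint_union_left]
            exact ⟨(hdC i).mono_right Set.sdiff_subset, by simp⟩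
          · rw [hμ1n i h]; exact (hdC i).mono_right Set.sdiff_subset
      let f : ι ⊕ W → ι ⊕ W := fun s => if s = Sum.inr y then Sum.inl k else s
      have hf : ∀ s t, f s = f t → s = t ∨ (s = Sum.inr y ∧ t = Sum.inl k) ∨
          (s = Sum.inl k ∧ t = Sum.inr y) := by
        intro s t hst
        simp only [f] at hst
        split_ifs at hst <;> simp_all
      have hbd : ∀ Z ⊆ C \ {y}, bd G (C \ {y}) μ1 Z = f '' bd G C μ Z := by
        intro Z hZC
        have hyZ : y ∉ Z := fun h => (hZC h).2 rfl
        ext s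
        constructor
        · rcases s with i | t
          · intro h
            obtain ⟨z, hz, a, ha, haz⟩ := inl_mem_bd.1 h
            by_cases hi : i = k
            · subst hi
              rw [hμ1k] at ha
              rcases ha with ha | ha
              · exact ⟨Sum.inl i, inl_mem_bd.2 ⟨z, hz, a, ha, haz⟩, by simp [f]⟩
              · obtain rfl : a = y := ha
                exact ⟨Sum.inr a, inr_mem_bd.2 ⟨z, hz, hyC, hyZ, haz⟩, by simp [f]⟩
            · rw [hμ1n i hi] at ha
              exact ⟨Sum.inl i, inl_mem_bd.2 ⟨z, hz, a, ha, haz⟩, by simp [f]⟩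
          · intro h
            obtain ⟨z, hz, ht, htZ, htz⟩ := inr_mem_bd.1 h
            refine ⟨Sum.inr t, inr_mem_bd.2 ⟨z, hz, ht.1, htZ, htz⟩, ?_⟩
            have : t ≠ y := ht.2
            simp [f, this]
        · rintro ⟨i | t, h, rfl⟩
          · obtain ⟨z, hz, a, ha, haz⟩ := inl_mem_bd.1 h
            simp only [f, reduceCtorEq, if_false]
            exact inl_mem_bd.2 ⟨z, hz, a, hsub i ha, haz⟩
          · obtain ⟨z, hz, ht, htZ, htz⟩ := inr_mem_bd.1 h
            by_cases hty : t = y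
            · subst hty
              simp only [f, if_true]
              exact inl_mem_bd.2 ⟨z, hz, t, by rw [hμ1k]; simp, htz⟩
            · simp only [f, Sum.inr.injEq, hty, if_false]
              exact inr_mem_bd.2 ⟨z, hz, ⟨ht, hty⟩, htZ, htz⟩
      have hXC1 : X ⊆ C \ {y} := fun z hz => ⟨hXC hz, fun h => hyX (h ▸ hz)⟩
      have hkX : ∀ Z ⊆ X, (bd G (C \ {y}) μ1 Z).ncard = (bd G C μ Z).ncard := by
        intro Z hZX
        rw [hbd Z (hZX.trans hXC1)]
        apply ncard_collapse_eq f _ _ hf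
        rintro ⟨-, h⟩
        obtain ⟨z, hz, h⟩ := inl_mem_bd.1 h
        exact hk (inl_mem_bd.2 ⟨z, hZX hz, h⟩)
      have hlt : ((C \ {y}) \ X).ncard < n := by
        rw [← hn]
        apply Set.ncard_lt_ncard _ (Set.toFinite _)
        refine ⟨Set.sdiff_subset_sdiff_left Set.sdiff_subset, fun h => ?_⟩
        exact (h ⟨hyC, hyX⟩).1.2 rfl
      obtain ⟨μ2, hM2, h2⟩ := ih _ hlt (C \ {y}) X μ1 rfl hXC1 hM1
        (by rw [hkX X le_rfl]; exact hX) (fun Z hXZ hZC => by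
          rw [hbd Z hZC]
          have h0 := hZ Z hXZ (hZC.trans Set.sdiff_subset)
          by_cases hkZ : Sum.inl k ∈ bd G C μ Z
          · have h1 : ¬ (bd G C μ Z).ncard ≤ Nat.card ι := fun h => hbad Z hXZ hZC h hkZ
            have := ncard_collapse_le f _ _ hf (bd G C μ Z)
            omega
          · rw [ncard_collapse_eq f _ _ hf _ (fun h => hkZ h.2)]; exact h0)
      exact ⟨μ2, hM2, fun Z hZX => by rw [h2 Z hZX, hkX Z hZX]⟩

/-- The strong invariant. -/
def StrongInv {W : Type u} {ι : Type v} (G : SimpleGraph W) (t : ℕ) (J : SimpleGraph ι) (C : Set W)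
    (μ : ι → Set W) : Prop :=
  Model G J C μ ∧ C.Nonempty ∧ (∀ x ∈ C, t ≤ (bd G C μ {x}).ncard) ∧
  (∀ Z ⊆ C, Z.Nonempty → Z ≠ C → Nat.card ι + 1 ≤ (bd G C μ Z).ncard) ∧
  Nat.card ι ≤ (bd G C μ C).ncard

lemma bd_self_subset {W : Type u} {ι : Type v} (G : SimpleGraph W) (C : Set W)
    (μ : ι → Set W) : bd G C μ C ⊆ Set.range Sum.inl := by
  rintro (i | y) hx
  · exact ⟨i, rfl⟩
  · obtain ⟨z, hz, h1, h2, -⟩ := inr_mem_bd.1 hx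
    exact absurd h1 h2

lemma ncard_range_inl {W : Type u} {ι : Type v} :
    (Set.range (Sum.inl : ι → ι ⊕ W)).ncard = Nat.card ι := by
  rw [← Set.image_univ, Set.ncard_image_of_injective _ Sum.inl_injective, Set.ncard_univ]

lemma bd_self_le {W : Type u} {ι : Type v} [Finite W] [Finite ι] (G : SimpleGraph W) (C : Set W)
    (μ : ι → Set W) : (bd G C μ C).ncard ≤ Nat.card ι := by
  rw [← ncard_range_inl (W := W)]
  exact Set.ncard_le_ncard (bd_self_subset G C μ) (Set.toFinite _)

lemma shrink {W : Type u} {ι : Type v} [Finite W] [Finite ι] (G : SimpleGraph W) (t : ℕ)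
    (J : SimpleGraph ι) (C : Set W) (μ : ι → Set W) (hM : Model G J C μ) (hC : C.Nonempty)
    (hdeg : ∀ x ∈ C, t ≤ (bd G C μ {x}).ncard)
    (hZ : ∀ Z ⊆ C, Z.Nonempty → Nat.card ι ≤ (bd G C μ Z).ncard) :
    ∃ X ⊆ C, ∃ μ', StrongInv G t J X μ' := by
  have hfin : {X : Set W | X ⊆ C ∧ X.Nonempty ∧ (bd G C μ X).ncard ≤ Nat.card ι}.Finite :=
    Set.toFinite _
  obtain ⟨X, ⟨hXC, hXn, hXc⟩, hmin⟩ := hfin.exists_minimal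
    ⟨C, le_rfl, hC, bd_self_le G C μ⟩
  obtain ⟨μ', hM', h⟩ := linking G J _ C X μ rfl hXC hM hXc
    (fun Z h1 h2 => hZ Z h2 (hXn.mono h1))
  refine ⟨X, hXC, μ', hM', hXn, fun x hx => ?_, fun Z hZX hZn hne => ?_, ?_⟩
  · rw [h _ (by simpa using hx)]; exact hdeg x (hXC hx)
  · rw [h Z hZX]
    by_contra hlt
    exact hne (le_antisymm hZX (hmin ⟨hZX.trans hXC, hZn, by omega⟩ hZX))
  · rw [h X le_rfl]; exact hZ X hXC hXn

lemma contract_step {W : Type u} {ι : Type v} {ι' : Type w} [Finite W] [Finite ι] [Finite ι']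
    (G : SimpleGraph W) (t : ℕ)
    (J : SimpleGraph ι) (J' : SimpleGraph ι') (C : Set W) (μ : ι → Set W)
    (hI : StrongInv G t J C μ) (π : ι → ι') (hs : Function.Surjective π) (a b : ι) (hab : J.Adj a b)
    (hπab : π a = π b)
    (hπ : ∀ x y, π x = π y → x = y ∨ (x = a ∧ y = b) ∨ (x = b ∧ y = a))
    (hJ : ∀ j j', J'.Adj j j' → ∃ i i', π i = j ∧ π i' = j' ∧ J.Adj i i')
    (hno : ∀ x ∈ C, ¬ (Sum.inl a ∈ bd G C μ {x} ∧ Sum.inl b ∈ bd G C μ {x})) :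
    ∃ μ', StrongInv G t J' C μ' := by
  obtain ⟨⟨⟨hc, hd, ha⟩, hdC⟩, hCn, hdeg, hZ, hCc⟩ := hI
  have hcard : Nat.card ι' + 1 ≤ Nat.card ι := by
    have := Fintype.ofFinite ι
    have := Fintype.ofFinite ι'
    rw [Nat.card_eq_fintype_card, Nat.card_eq_fintype_card]
    exact Fintype.card_lt_of_surjective_not_injective π hs
      (fun h => hab.ne (h hπab))
  let f : ι ⊕ W → ι' ⊕ W := Sum.map π id
  have hf : ∀ x y, f x = f y → x = y ∨ (x = Sum.inl a ∧ y = Sum.inl b) ∨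
      (x = Sum.inl b ∧ y = Sum.inl a) := by
    rintro (x | x) (y | y) h
    · simpa using hπ x y (by simpa [f] using h)
    · simp [f] at h
    · simp [f] at h
    · simpa [f] using h
  let μ' : ι' → Set W := fun j => {x | ∃ i, π i = j ∧ x ∈ μ i}
  have hbd : ∀ Z, bd G C μ' Z = f '' bd G C μ Z := by
    intro Z
    ext (j | y)
    · constructor
      · intro h
        obtain ⟨z, hz, x, ⟨i, rfl, hx⟩, hxz⟩ := inl_mem_bd.1 h
        exact ⟨Sum.inl i, inl_mem_bd.2 ⟨z, hz, x, hx, hxz⟩, rfl⟩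
      · rintro ⟨i | y, h, he⟩
        · obtain ⟨z, hz, x, hx, hxz⟩ := inl_mem_bd.1 h
          have he' : π i = j := by simpa [f] using he
          exact inl_mem_bd.2 ⟨z, hz, x, ⟨i, he', hx⟩, hxz⟩
        · simp [f] at he
    · constructor
      · intro h
        exact ⟨Sum.inr y, h, rfl⟩
      · rintro ⟨i | y', h, he⟩
        · simp [f] at he
        · obtain rfl : y' = y := by simpa [f] using he
          exact h
  refine ⟨μ', ⟨⟨fun j => ?_, fun j j' hjj => ?_, fun j j' hjj => ?_⟩, fun j => ?_⟩, hCn,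
    fun x hx => ?_, fun Z hZC hZn hne => ?_, ?_⟩
  · obtain ⟨i, rfl⟩ := hs j
    by_cases hi : i = a ∨ i = b
    · have : μ' (π i) = μ a ∪ μ b := by
        have hia : π i = π a := by rcases hi with rfl | rfl; rfl; exact hπab.symm
        ext x
        simp only [μ', Set.mem_ofPred_eq, Set.mem_union]
        constructor
        · rintro ⟨i', h, hx⟩
          rcases hπ _ _ (h.trans hia) with rfl | ⟨rfl, -⟩ | ⟨rfl, -⟩ <;> tauto
        · rintro (h | h)
          · exact ⟨a, hia.symm, h⟩
          · exact ⟨b, (hia.trans hπab).symm, h⟩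
      rw [this]
      obtain ⟨x, hx, y, hy, hxy⟩ := ha hab
      exact union_connected_of_adj (hc a) (hc b) hx hy hxy
    · have : μ' (π i) = μ i := by
        ext x
        simp only [μ', Set.mem_ofPred_eq]
        constructor
        · rintro ⟨i', h, hx⟩
          rcases hπ _ _ h with rfl | ⟨-, h⟩ | ⟨-, h⟩ <;> tauto
        · exact fun h => ⟨i, rfl, h⟩
      rw [this]; exact hc i
  · show Disjoint (μ' j) (μ' j')
    rw [Set.disjoint_left]
    rintro x ⟨i, rfl, hx⟩ ⟨i', rfl, hx'⟩
    exact Set.disjoint_left.1 (hd (fun h => hjj (congrArg π h))) hx hx'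
  · obtain ⟨i, i', rfl, rfl, h⟩ := hJ _ _ hjj
    obtain ⟨x, hx, y, hy, hxy⟩ := ha h
    exact ⟨x, ⟨i, rfl, hx⟩, y, ⟨i', rfl, hy⟩, hxy⟩
  · rw [Set.disjoint_left]
    rintro x ⟨i, rfl, hx⟩ hxC
    exact Set.disjoint_left.1 (hdC i) hx hxC
  · rw [hbd, ncard_collapse_eq f _ _ hf _ (hno x hx)]; exact hdeg x hx
  · have h1 := hZ Z hZC hZn hne
    have h2 := ncard_collapse_le f _ _ hf (bd G C μ Z)
    rw [hbd]; omega
  · have h2 := ncard_collapse_le f _ _ hf (bd G C μ C)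
    rw [hbd]; omega

open Classical in
lemma add_step {W : Type u} {ι : Type v} {ι' : Type w} [Finite W] [Finite ι] [Finite ι']
    (G : SimpleGraph W) (t : ℕ)
    (J : SimpleGraph ι) (J' : SimpleGraph ι') (C : Set W) (μ : ι → Set W)
    (hI : StrongInv G t J C μ) (ht : Nat.card ι < t)
    (g : ι → ι') (hg : Function.Injective g) (n : ι') (hgn : ∀ i, g i ≠ n)
    (hall : ∀ j, j = n ∨ ∃ i, g i = j) (hcard : Nat.card ι' = Nat.card ι + 1)
    (x : W) (hx : x ∈ C)
    (hJ : ∀ i i', J'.Adj (g i) (g i') → J.Adj i i')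
    (hJn : ∀ i, J'.Adj n (g i) → Sum.inl i ∈ bd G C μ {x}) :
    ∃ X ⊂ C, ∃ μ', StrongInv G t J' X μ' := by
  obtain ⟨⟨⟨hc, hd, ha⟩, hdC⟩, hCn, hdeg, hZ, hCc⟩ := hI
  let μ' : ι' → Set W := Function.extend g μ (fun _ => {x})
  have hμg : ∀ i, μ' (g i) = μ i := fun i => hg.extend_apply _ _ _
  have hμn : μ' n = {x} := by
    apply Function.extend_apply'
    rintro ⟨i, hi⟩
    exact hgn i hi
  let f : ι ⊕ W → ι' ⊕ W := Sum.elim (fun i => Sum.inl (g i))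
    (fun y => if y = x then Sum.inl n else Sum.inr y)
  have hfl : ∀ i, f (Sum.inl i) = Sum.inl (g i) := fun _ => rfl
  have hfx : f (Sum.inr x) = Sum.inl n := by simp [f]
  have hfr : ∀ y, y ≠ x → f (Sum.inr y) = Sum.inr y := fun y hy => by simp [f, hy]
  have hf : Function.Injective f := by
    rintro (i | y) (i' | y') h
    · rw [hfl, hfl] at h
      rw [hg (Sum.inl_injective h)]
    · by_cases hy : y' = x
      · subst hy; rw [hfl, hfx] at h
        exact absurd (Sum.inl_injective h) (hgn i)
      · rw [hfl, hfr _ hy] at h; simp at h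
    · by_cases hy : y = x
      · subst hy; rw [hfl, hfx] at h
        exact absurd (Sum.inl_injective h).symm (hgn i')
      · rw [hfl, hfr _ hy] at h; simp at h
    · by_cases hy : y = x <;> by_cases hy' : y' = x
      · rw [hy, hy']
      · rw [hy, hfx, hfr _ hy'] at h; simp at h
      · rw [hy', hfx, hfr _ hy] at h; simp at h
      · rw [hfr _ hy, hfr _ hy'] at h
        rw [Sum.inr_injective h]
  have hbd : ∀ Z ⊆ C \ {x}, bd G (C \ {x}) μ' Z = f '' bd G C μ Z := by
    intro Z hZC
    have hxZ : x ∉ Z := fun h => (hZC h).2 rfl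
    ext (j | y)
    · constructor
      · intro h
        obtain ⟨z, hz, y, hy, hyz⟩ := inl_mem_bd.1 h
        rcases hall j with rfl | ⟨i, rfl⟩
        · rw [hμn] at hy
          obtain rfl : y = x := hy
          exact ⟨Sum.inr y, inr_mem_bd.2 ⟨z, hz, hx, hxZ, hyz⟩, hfx⟩
        · rw [hμg] at hy
          exact ⟨Sum.inl i, inl_mem_bd.2 ⟨z, hz, y, hy, hyz⟩, rfl⟩
      · rintro ⟨i | y, h, he⟩
        · obtain ⟨z, hz, y, hy, hyz⟩ := inl_mem_bd.1 h
          rw [hfl] at he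
          obtain rfl := Sum.inl_injective he
          exact inl_mem_bd.2 ⟨z, hz, y, by rw [hμg]; exact hy, hyz⟩
        · obtain ⟨z, hz, hyC, hyZ, hyz⟩ := inr_mem_bd.1 h
          by_cases hy : y = x
          · subst hy
            rw [hfx] at he
            obtain rfl := Sum.inl_injective he
            exact inl_mem_bd.2 ⟨z, hz, y, by rw [hμn]; rfl, hyz⟩
          · rw [hfr _ hy] at he; simp at he
    · constructor
      · intro h
        obtain ⟨z, hz, hyC, hyZ, hyz⟩ := inr_mem_bd.1 h
        exact ⟨Sum.inr y, inr_mem_bd.2 ⟨z, hz, hyC.1, hyZ, hyz⟩, hfr y hyC.2⟩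
      · rintro ⟨i | y', h, he⟩
        · simp [f] at he
        · by_cases hy : y' = x
          · rw [hy, hfx] at he; simp at he
          · rw [hfr _ hy] at he
            obtain rfl := Sum.inr_injective he
            obtain ⟨z, hz, hyC, hyZ, hyz⟩ := inr_mem_bd.1 h
            exact inr_mem_bd.2 ⟨z, hz, ⟨hyC, hy⟩, hyZ, hyz⟩
  have hne : (C \ {x}).Nonempty := by
    rw [Set.nonempty_iff_ne_empty]
    intro h
    have hCx : C = {x} := by
      apply le_antisymm (Set.sdiff_eq_empty.1 h)
      simpa using hx
    have h1 := bd_self_le G C μ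
    have h2 := hdeg x hx
    rw [← hCx] at h2
    omega
  have hM : Model G J' (C \ {x}) μ' := by
    have hxm : ∀ i, x ∉ μ i := fun i h => Set.disjoint_left.1 (hdC i) h hx
    refine ⟨⟨fun j => ?_, fun j j' hjj => ?_, fun j j' hjj => ?_⟩, fun j => ?_⟩
    · rcases hall j with rfl | ⟨i, rfl⟩
      · rw [hμn]
        exact induce_connected_of_patches (G := G) (s := {x}) x rfl (by
          intro v hv
          obtain rfl : v = x := hv
          exact ⟨{v}, le_rfl, rfl, rfl, Reachable.refl _⟩)
      · rw [hμg]; exact hc i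
    · show Disjoint (μ' j) (μ' j')
      rcases hall j with rfl | ⟨i, rfl⟩ <;> rcases hall j' with rfl | ⟨i', rfl⟩
      · exact absurd rfl hjj
      · rw [hμn, hμg]; exact Set.disjoint_singleton_left.2 (hxm i')
      · rw [hμn, hμg]; exact Set.disjoint_singleton_right.2 (hxm i)
      · rw [hμg, hμg]; exact hd (fun h => hjj (congrArg g h))
    · rcases hall j with rfl | ⟨i, rfl⟩ <;> rcases hall j' with rfl | ⟨i', rfl⟩
      · exact absurd hjj (J'.irrefl)
      · obtain ⟨z, hz, y, hy, hyz⟩ := inl_mem_bd.1 (hJn i' hjj)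
        obtain rfl : z = x := hz
        exact ⟨z, by rw [hμn]; rfl, y, by rw [hμg]; exact hy, hyz.symm⟩
      · obtain ⟨z, hz, y, hy, hyz⟩ := inl_mem_bd.1 (hJn i hjj.symm)
        obtain rfl : z = x := hz
        exact ⟨y, by rw [hμg]; exact hy, z, by rw [hμn]; rfl, hyz⟩
      · rw [hμg, hμg]; exact ha (hJ _ _ hjj)
    · rcases hall j with rfl | ⟨i, rfl⟩
      · rw [hμn]; simp
      · rw [hμg]; exact (hdC i).mono_right Set.sdiff_subset
  obtain ⟨X, hX, μ2, h2⟩ := shrink G t J' (C \ {x}) μ' hM hne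
    (fun y hy => by
      rw [hbd _ (by simpa using hy), Set.ncard_image_of_injective _ hf]
      exact hdeg y hy.1)
    (fun Z hZC hZn => by
      rw [hbd _ hZC, Set.ncard_image_of_injective _ hf, hcard]
      exact hZ Z (hZC.trans Set.sdiff_subset) hZn (fun h => (hZC (h ▸ hx)).2 rfl))
  exact ⟨X, ⟨hX.trans Set.sdiff_subset, fun h => (hX (h hx)).2 rfl⟩, μ2, h2⟩

lemma inv_touch {W : Type u} {ι : Type v} [Finite W] [Finite ι] {G : SimpleGraph W} {t : ℕ}
    {J : SimpleGraph ι} {C : Set W} {μ : ι → Set W} (hI : StrongInv G t J C μ) (i : ι) :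
    Sum.inl i ∈ bd G C μ C := by
  have := Set.eq_of_subset_of_ncard_le (bd_self_subset G C μ)
    (by rw [ncard_range_inl]; exact hI.2.2.2.2) (Set.toFinite _)
  rw [this]; exact ⟨i, rfl⟩

lemma inv_connected {W : Type u} {ι : Type v} [Finite W] [Finite ι] {G : SimpleGraph W} {t : ℕ}
    {J : SimpleGraph ι} {C : Set W} {μ : ι → Set W} (hI : StrongInv G t J C μ) :
    (G.induce C).Connected := by
  obtain ⟨hM, ⟨x, hx⟩, hdeg, hZ, hCc⟩ := hI
  rw [connected_iff_exists_forall_reachable]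
  refine ⟨⟨x, hx⟩, ?_⟩
  let Z : Set W := {y | ∃ hy : y ∈ C, (G.induce C).Reachable ⟨x, hx⟩ ⟨y, hy⟩}
  have hZC : Z ⊆ C := fun y hy => hy.1
  by_cases hne : Z = C
  · rintro ⟨y, hy⟩
    have : y ∈ Z := hne ▸ hy
    exact this.2
  · have h1 := hZ Z hZC ⟨x, hx, Reachable.refl _⟩ hne
    have h2 : bd G C μ Z ⊆ Set.range Sum.inl := by
      rintro (i | y) h
      · exact ⟨i, rfl⟩
      · obtain ⟨z, ⟨hzC, hz⟩, hyC, hyZ, hyz⟩ := inr_mem_bd.1 h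
        refine absurd ⟨hyC, hz.trans (Adj.reachable ?_)⟩ hyZ
        exact hyz.symm
    have h3 := Set.ncard_le_ncard h2 (Set.toFinite _)
    rw [ncard_range_inl] at h3
    omega

lemma card_prevSet {V : Type u} {t : ℕ} (ω : Fin t ≃ V) (s : ℕ) (hs : s ≤ t) :
    Nat.card (prevSet ω s) = s := by
  rw [Nat.card_coe_set_eq, prevSet, Set.ncard_image_of_injective _ ω.injective]
  have : ({i : Fin t | (i : ℕ) < s}) = Set.range (Fin.castLE hs) := by
    ext i
    constructor
    · intro h; exact ⟨⟨i, h⟩, rfl⟩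
    · rintro ⟨j, rfl⟩; exact j.2
  rw [this, ← Set.image_univ, Set.ncard_image_of_injective _ (Fin.castLE_injective hs),
    Set.ncard_univ, Nat.card_eq_fintype_card, Fintype.card_fin]

open Classical in
lemma main_loop {V : Type v} {W : Type u} [Fintype V] [Finite W] (H : SimpleGraph V)
    (Ω : Set (Fin (Fintype.card V) ≃ V)) (hΩ : IsContractibleOrdering H Ω) (G : SimpleGraph W) :
    ∀ (n s : ℕ) (C : Set W) (ω : Fin (Fintype.card V) ≃ V)
      (μ : prevSet ω s → Set W), C.ncard * (Fintype.card V + 1) + s = n → ω ∈ Ω →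
      s ≤ Fintype.card V → StrongInv G (Fintype.card V) (H.induce (prevSet ω s)) C μ →
      ∃ μ : Option V → Set W, IsMinorMap G (apexGraph H) μ := by
  intro n
  induction n using Nat.strong_induction_on with
  | _ n ih =>
  intro s C ω μ hn hω hs hI
  rcases hs.eq_or_lt with rfl | hlt
  · have hall : ∀ v, v ∈ prevSet ω (Fintype.card V) :=
      fun v => ⟨ω.symm v, (ω.symm v).2, by simp⟩
    have hconn := inv_connected hI
    have ht := inv_touch hI
    obtain ⟨⟨⟨hc, hd, ha⟩, hdC⟩, -⟩ := hI
    refine ⟨fun o => o.elim C (fun v => μ ⟨v, hall v⟩), ?_, ?_, ?_⟩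
    · rintro (_ | v)
      · exact hconn
      · exact hc _
    · rintro (_ | v) (_ | v') h
      · exact absurd rfl h
      · exact (hdC _).symm
      · exact hdC _
      · apply hd
        intro h'
        apply h
        rw [Subtype.mk.injEq] at h'
        rw [h']
    · rintro (_ | v) (_ | v') h
      · exact absurd h (SimpleGraph.irrefl _)
      · obtain ⟨z, hz, y, hy, hyz⟩ := inl_mem_bd.1 (ht ⟨v', hall v'⟩)
        exact ⟨z, hz, y, hy, hyz.symm⟩
      · obtain ⟨z, hz, y, hy, hyz⟩ := inl_mem_bd.1 (ht ⟨v, hall v⟩)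
        exact ⟨y, hy, z, hz, hyz⟩
      · have hvv : H.Adj v v' := by
          simp only [apexGraph, fromRel_adj] at h
          rcases h.2 with (h | ⟨a, b, h1, h2, h3⟩) | (h | ⟨a, b, h1, h2, h3⟩)
          · simp at h
          · simp only [Option.some.injEq] at h1 h2; subst h1 h2; exact h3
          · simp at h
          · simp only [Option.some.injEq] at h1 h2; subst h1 h2; exact h3.symm
        exact ha (w₁ := ⟨v, hall v⟩) (w₂ := ⟨v', hall v'⟩) hvv
  · let σ : Fin (Fintype.card V) := ⟨s, hlt⟩
    have hadd : ∀ x ∈ C, (∀ i : prevSet ω s, (i : V) ∈ nbrs H ω σ → Sum.inl i ∈ bd G C μ {x}) →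
        ∃ μ : Option V → Set W, IsMinorMap G (apexGraph H) μ := by
      intro x hx hnb
      have hsub : prevSet ω s ⊆ prevSet ω (s + 1) :=
        Set.image_mono (fun i (hi : (i : ℕ) < s) => Nat.lt_succ_of_lt hi)
      have hσ : ω σ ∈ prevSet ω (s + 1) := ⟨σ, Nat.lt_succ_self s, rfl⟩
      have hσ' : ω σ ∉ prevSet ω s := by
        rintro ⟨i, hi, h⟩
        obtain rfl := ω.injective h
        exact lt_irrefl s hi
      obtain ⟨X, hX, μ', hI'⟩ := add_step G (Fintype.card V) (H.induce (prevSet ω s))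
        (H.induce (prevSet ω (s + 1))) C μ hI (by rw [card_prevSet ω s hs]; exact hlt)
        (Set.inclusion hsub) (Set.inclusion_injective hsub) ⟨ω σ, hσ⟩
        (by
          rintro ⟨i, hi⟩ h
          have h' : i = ω σ := congrArg Subtype.val h
          rw [h'] at hi
          exact hσ' hi)
        (by
          rintro ⟨_, i, hi, rfl⟩
          by_cases his : (i : ℕ) < s
          · exact Or.inr ⟨⟨ω i, i, his, rfl⟩, rfl⟩
          · left
            have : i = σ := Fin.ext (le_antisymm (Nat.lt_succ_iff.1 hi) (not_lt.1 his))
            subst this; rfl)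
        (by rw [card_prevSet ω s hs, card_prevSet ω (s + 1) hlt])
        x hx (fun i i' h => h)
        (fun i h => hnb i ⟨i.2, h⟩)
      have hXc : X.ncard < C.ncard := Set.ncard_lt_ncard hX (Set.toFinite _)
      refine ih _ ?_ (s + 1) X ω μ' rfl hω hlt hI'
      rw [← hn]
      have := Nat.mul_le_mul_right (Fintype.card V + 1) (Nat.succ_le_of_lt hXc)
      rw [Nat.succ_mul] at this
      omega
    obtain ⟨-, hrec, hcon⟩ := hΩ
    by_cases h2 : ∃ a ∈ nbrs H ω σ, ∃ b ∈ nbrs H ω σ, a ≠ b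
    · obtain ⟨a, ha, b, hb, hab⟩ := h2
      have hadj : H.Adj a b := (hrec ω hω σ).2 a ha b hb hab
      have hnb : nbrs H ω σ = {a, b} := by
        symm
        apply Set.eq_of_subset_of_ncard_le
        · rintro x (rfl | rfl) <;> assumption
        · rw [Set.ncard_pair hab]; exact (hrec ω hω σ).1
        · exact Set.toFinite _
      by_cases hx : ∃ x ∈ C, Sum.inl ⟨a, ha.1⟩ ∈ bd G C μ {x} ∧ Sum.inl ⟨b, hb.1⟩ ∈ bd G C μ {x}
      · obtain ⟨x, hx, hxa, hxb⟩ := hx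
        refine hadd x hx ?_
        rintro ⟨i, hi'⟩ hi
        rw [hnb] at hi
        rcases hi with h | h
        · have h : i = a := h
          subst h; exact hxa
        · have h : i = b := h
          subst h; exact hxb
      · push Not at hx
        obtain ⟨ω', hω', ⟨φ⟩⟩ := hcon ω hω σ a ha b hb hab
        have hs0 : 0 < s := by
          obtain ⟨i, hi, -⟩ := ha.1
          exact lt_of_le_of_lt (Nat.zero_le _) hi
        let col : prevSet ω s → ↥(prevSet ω s \ {b}) := fun x =>
          if h : (x : V) = b then ⟨a, ha.1, hab⟩ else ⟨x, x.2, h⟩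
        have hcolb : ∀ x : prevSet ω s, (x : V) = b → (col x : V) = a :=
          fun x hx => by simp [col, hx]
        have hcoln : ∀ (x : prevSet ω s) (_ : (x : V) ≠ b), (col x : V) = x :=
          fun x hx => by simp [col, hx]
        obtain ⟨μ', hI'⟩ := contract_step G (Fintype.card V) (H.induce (prevSet ω s))
          (H.induce (prevSet ω' (s - 1))) C μ hI (fun x => φ.symm (col x))
          (by
            intro j
            obtain ⟨y, hy⟩ : ∃ y, φ j = y := ⟨_, rfl⟩
            refine ⟨⟨y.1, y.2.1⟩, ?_⟩
            have : col ⟨y.1, y.2.1⟩ = y := Subtype.ext (hcoln ⟨y.1, y.2.1⟩ (fun h => y.2.2 h))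
            show φ.symm (col ⟨y.1, y.2.1⟩) = j
            rw [this, ← hy]; simp)
          ⟨a, ha.1⟩ ⟨b, hb.1⟩ hadj
          (by
            show φ.symm (col _) = φ.symm (col _)
            exact congrArg _ (Subtype.ext ((hcoln ⟨a, ha.1⟩ hab).trans (hcolb ⟨b, hb.1⟩ rfl).symm)))
          (by
            intro x y h
            have h : (col x : V) = col y := congrArg Subtype.val (φ.symm.injective h)
            by_cases hxb : (x : V) = b <;> by_cases hyb : (y : V) = b
            · left; exact Subtype.ext (hxb.trans hyb.symm)
            · rw [hcolb x hxb, hcoln y hyb] at h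
              right; right; exact ⟨Subtype.ext hxb, Subtype.ext h.symm⟩
            · rw [hcolb y hyb, hcoln x hxb] at h
              right; left; exact ⟨Subtype.ext h, Subtype.ext hyb⟩
            · rw [hcoln y hyb, hcoln x hxb] at h
              left; exact Subtype.ext h)
          (by
            intro j j' hjj
            have h1 : (contractOn H (prevSet ω s) a b).Adj (φ j) (φ j') := φ.map_adj_iff.2 hjj
            obtain ⟨x, hx⟩ : ∃ y, φ j = y := ⟨_, rfl⟩
            obtain ⟨y, hy⟩ : ∃ y, φ j' = y := ⟨_, rfl⟩
            have hj : j = φ.symm x := by rw [← hx]; simp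
            have hj' : j' = φ.symm y := by rw [← hy]; simp
            rw [hx, hy] at h1
            have hx' : col ⟨x.1, x.2.1⟩ = x := Subtype.ext (hcoln ⟨x.1, x.2.1⟩ (fun h => x.2.2 h))
            have hy' : col ⟨y.1, y.2.1⟩ = y := Subtype.ext (hcoln ⟨y.1, y.2.1⟩ (fun h => y.2.2 h))
            have hba : ∀ z : ↥(prevSet ω s \ {b}), (z : V) = a → col ⟨b, hb.1⟩ = z :=
              fun z hz => Subtype.ext ((hcolb ⟨b, hb.1⟩ rfl).trans hz.symm)
            suffices h : ∃ i i', col i = x ∧ col i' = y ∧ H.Adj (i : V) (i' : V) by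
              obtain ⟨i, i', h3, h4, h5⟩ := h
              refine ⟨i, i', ?_, ?_, h5⟩
              · show φ.symm (col i) = j
                rw [h3, hj]
              · show φ.symm (col i') = j'
                rw [h4, hj']
            simp only [contractOn, fromRel_adj] at h1
            rcases h1.2 with (h | ⟨h, h'⟩ | ⟨h, h'⟩) | (h | ⟨h, h'⟩ | ⟨h, h'⟩)
            · exact ⟨_, _, hx', hy', h⟩
            · exact ⟨_, _, hba x h, hy', h'⟩
            · exact ⟨_, _, hx', hba y h, h'⟩
            · exact ⟨_, _, hx', hy', h.symm⟩
            · exact ⟨_, _, hx', hba y h, h'.symm⟩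
            · exact ⟨_, _, hba x h, hy', h'.symm⟩)
          (fun x hxC h => hx x hxC h.1 h.2)
        exact ih _ (by omega) (s - 1) C ω' μ' rfl hω' (by omega) hI'
    · push Not at h2
      by_cases h1 : (nbrs H ω σ).Nonempty
      · obtain ⟨a, ha⟩ := h1
        obtain ⟨x, hx, y, hy, hyx⟩ := inl_mem_bd.1 (inv_touch hI ⟨a, ha.1⟩)
        refine hadd x hx ?_
        rintro ⟨i, hi'⟩ hi
        obtain rfl : i = a := h2 i hi a ha
        exact inl_mem_bd.2 ⟨x, rfl, y, hy, hyx⟩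
      · obtain ⟨x, hx⟩ := hI.2.1
        exact hadd x hx (fun i hi => absurd ⟨_, hi⟩ h1)

lemma minor_of_degree {V : Type v} {W : Type u} [Fintype V] [Finite W] (H : SimpleGraph V)
    (hH : ContractiblyOrderable H) (G : SimpleGraph W) (U : Set W) (hU : U.Nonempty)
    (hdeg : ∀ x ∈ U, Fintype.card V ≤ {y | y ∈ U ∧ G.Adj y x}.ncard) :
    ∃ μ : Option V → Set W, IsMinorMap G (apexGraph H) μ := by
  obtain ⟨Ω, hΩ⟩ := hH
  obtain ⟨ω, hω⟩ := hΩ.1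
  have hcard := card_prevSet ω 0 (Nat.zero_le _)
  have hemp : IsEmpty (prevSet ω 0) := ⟨by rintro ⟨_, i, hi, -⟩; exact Nat.not_lt_zero _ hi⟩
  obtain ⟨X, -, μ, hI⟩ := shrink G (Fintype.card V) (H.induce (prevSet ω 0)) U
    (fun i => hemp.elim i) ⟨⟨fun i => hemp.elim i, fun i => hemp.elim i, fun i => hemp.elim i⟩,
      fun i => hemp.elim i⟩ hU
    (by
      intro x hx
      refine (hdeg x hx).trans ?_
      rw [← Set.ncard_image_of_injective {y | y ∈ U ∧ G.Adj y x}
        (Sum.inr_injective (α := prevSet ω 0))]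
      apply Set.ncard_le_ncard _ (Set.toFinite _)
      rintro _ ⟨y, ⟨hy, hyx⟩, rfl⟩
      exact inr_mem_bd.2 ⟨x, rfl, hy, fun h => hyx.ne h, hyx⟩)
    (by intro Z _ _; rw [hcard]; exact Nat.zero_le _)
  exact main_loop H Ω hΩ G _ 0 X ω μ rfl hω (Nat.zero_le _) hI

open Classical in
lemma list_color {W : Type u} {α : Type v} [Finite W] [Nonempty α] (G : SimpleGraph W) (t : ℕ)
    (L : W → Finset α) (hL : ∀ x, t ≤ (L x).card)
    (hdeg : ∀ U : Set W, U.Nonempty → ∃ x ∈ U, {y | y ∈ U ∧ G.Adj y x}.ncard < t) :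
    ∀ (n : ℕ) (U : Set W), U.ncard = n → ∃ c : W → α, (∀ x ∈ U, c x ∈ L x) ∧
      ∀ x ∈ U, ∀ y ∈ U, G.Adj x y → c x ≠ c y := by
  intro n
  induction n with
  | zero =>
    intro U hU
    have hU : U = ∅ := (Set.ncard_eq_zero (Set.toFinite _)).1 hU
    subst hU
    exact ⟨fun _ => Classical.arbitrary α, by simp, by simp⟩
  | succ n ih =>
    intro U hU
    have hUn : U.Nonempty := by
      rw [Set.nonempty_iff_ne_empty]; rintro rfl; simp at hU
    obtain ⟨x, hx, hlt⟩ := hdeg U hUn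
    have h1 : (U \ {x}).ncard = n := by
      rw [Set.ncard_sdiff_singleton_of_mem hx, hU]; rfl
    obtain ⟨c, hc, hp⟩ := ih _ h1
    have h2 : ∃ a ∈ (L x : Set α), a ∉ c '' {y | y ∈ U ∧ G.Adj y x} := by
      refine Set.exists_mem_notMem_of_ncard_lt_ncard ?_ (Set.toFinite _)
      rw [Set.ncard_coe_finset]
      exact lt_of_le_of_lt (Set.ncard_image_le (Set.toFinite _)) (hlt.trans_le (hL x))
    obtain ⟨a, haL, ha⟩ := h2
    refine ⟨Function.update c x a, fun y hy => ?_, fun y hy z hz hyz => ?_⟩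
    · by_cases h : y = x
      · subst h; simpa using haL
      · rw [Function.update_of_ne h]; exact hc y ⟨hy, h⟩
    · by_cases h : y = x
      · subst h
        rw [Function.update_self, Function.update_of_ne hyz.ne']
        exact fun h => ha ⟨z, ⟨hz, hyz.symm⟩, h.symm⟩
      · by_cases h' : z = x
        · subst h'
          rw [Function.update_self, Function.update_of_ne h]
          exact fun h => ha ⟨y, ⟨hy, hyz⟩, h⟩
        · rw [Function.update_of_ne h, Function.update_of_ne h']
          exact hp y ⟨hy, h⟩ z ⟨hz, h'⟩ hyz

end Aux

/-- If `H` is a spanning subgraph of a contractibly orderable graph, then every graph with no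
`H⁺`-minor is `(|V(H⁺)|-1)`-list-colorable: for every assignment of a list of at least
`|V(H)|` colors to each vertex there is a proper coloring choosing each vertex's color from
its own list. -/
theorem no_apex_minor_implies_list_colorable
    {V W : Type*} [Fintype V] [Fintype W]
    (H H₁ : SimpleGraph V) (hle : H ≤ H₁) (hco : ContractiblyOrderable H₁)
    (G : SimpleGraph W)
    (hminor : ¬ ∃ μ : Option V → Set W, IsMinorMap G (apexGraph H) μ)
    (α : Type*) (L : W → Finset α) (hL : ∀ w, Fintype.card V ≤ (L w).card) :
    ∃ c : W → α, (∀ w, c w ∈ L w) ∧ ∀ ⦃u v : W⦄, G.Adj u v → c u ≠ c v := by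
  have hdeg : ∀ U : Set W, U.Nonempty →
      ∃ x ∈ U, {y | y ∈ U ∧ G.Adj y x}.ncard < Fintype.card V := by
    intro U hU
    by_contra hcon
    push Not at hcon
    obtain ⟨μ, hc, hd, ha⟩ := minor_of_degree H₁ hco G U hU hcon
    refine hminor ⟨μ, hc, hd, fun x y hxy => ha ?_⟩
    simp only [apexGraph, fromRel_adj] at hxy ⊢
    refine ⟨hxy.1, ?_⟩
    rcases hxy.2 with (h | ⟨a, b, h1, h2, h3⟩) | (h | ⟨a, b, h1, h2, h3⟩)
    · exact Or.inl (Or.inl h)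
    · exact Or.inl (Or.inr ⟨a, b, h1, h2, hle h3⟩)
    · exact Or.inr (Or.inl h)
    · exact Or.inr (Or.inr ⟨a, b, h1, h2, hle h3⟩)
  rcases isEmpty_or_nonempty W with hW | ⟨⟨w⟩⟩
  · exact ⟨fun x => hW.elim x, fun x => hW.elim x, fun x => hW.elim x⟩
  · obtain ⟨x, -, hx⟩ := hdeg {w} ⟨w, rfl⟩
    have hpos : 0 < (L w).card := lt_of_lt_of_le (lt_of_le_of_lt (Nat.zero_le _) hx) (hL w)
    obtain ⟨a, -⟩ := Finset.card_pos.1 hpos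
    have : Nonempty α := ⟨a⟩
    obtain ⟨c, h1, h2⟩ := list_color G (Fintype.card V) L hL hdeg _ Set.univ rfl
    exact ⟨c, fun w => h1 w trivial, fun u v huv => h2 u trivial v trivial huv⟩
end

section
/- Let t be a positive integer and let H be a graph on t vertices admitting a contractible ordering Ω. If G is a graph and S ⊆ V(G) is well-connected in G such that every vertex in V(G)∖S has degree at least t in G and G[S] contains a spanning subgraph isomorphic to H[ω_{[|S|]}] for some ω ∈ Ω, then G contains an H⁺-minor such that the branch set of the apex is a singleton contained in V(G)∖S. -/
open SimpleGraph

section Sep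

variable {V : Type*}

/-- A separation of `G`: a pair of sets covering `V(G)` with no edge from `A∖B` to `B∖A`. -/
def IsSeparation (G : SimpleGraph V) (A B : Set V) : Prop :=
  A ∪ B = Set.univ ∧ ∀ a ∈ A \ B, ∀ b ∈ B \ A, ¬ G.Adj a b

/-- `S` is well-connected in `G`: `S ≠ V(G)` and there is no nontrivial separation `(A,B)`
with `S ⊆ A` of order less than `|S|`. -/
def WellConnected (G : SimpleGraph V) (S : Set V) : Prop :=
  S ≠ Set.univ ∧
    ¬ ∃ A B : Set V, IsSeparation G A B ∧ (A \ B).Nonempty ∧ (B \ A).Nonempty ∧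
      S ⊆ A ∧ (A ∩ B).ncard < S.ncard

end Sep


section Helpers

variable {V W : Type*}

/-- Cut characterisation of connected vertex sets. -/
theorem conn_iff (G : SimpleGraph W) (X : Set W) :
    (G.induce X).Connected ↔ X.Nonempty ∧ ∀ Y : Set W, (∃ y ∈ X, y ∈ Y) →
      (∀ a ∈ X, a ∈ Y → ∀ b ∈ X, G.Adj a b → b ∈ Y) → X ⊆ Y := by
  constructor
  · intro h
    refine ⟨?_, ?_⟩
    · obtain ⟨x⟩ := h.nonempty
      exact ⟨x, x.2⟩
    · rintro Y ⟨y, hyX, hyY⟩ hcl z hz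
      obtain ⟨p⟩ := h.preconnected ⟨y, hyX⟩ ⟨z, hz⟩
      have key : ∀ (u v : X), (G.induce X).Walk u v → (u : W) ∈ Y → (v : W) ∈ Y := by
        intro u v p
        induction p with
        | nil => exact id
        | cons hadj _ ih =>
          intro hu
          exact ih (hcl _ (Subtype.mem _) hu _ (Subtype.mem _) hadj)
      exact key _ _ p hyY
  · rintro ⟨⟨x, hx⟩, h⟩
    have : Nonempty X := ⟨⟨x, hx⟩⟩
    have hr : ∀ z : X, (G.induce X).Reachable ⟨x, hx⟩ z := by
      intro z
      have := h {y | ∃ hy : y ∈ X, (G.induce X).Reachable ⟨x, hx⟩ ⟨y, hy⟩}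
        ⟨x, hx, hx, Reachable.refl _⟩ (by
          rintro a ha ⟨_, hra⟩ b hb hab
          refine ⟨hb, hra.trans ?_⟩
          apply Adj.reachable
          exact hab) z.2
      obtain ⟨_, h'⟩ := this
      exact h'
    exact Connected.mk (fun u v => (hr u).symm.trans (hr v))

theorem conn_singleton (G : SimpleGraph W) (x : W) : (G.induce ({x} : Set W)).Connected := by
  rw [conn_iff]
  refine ⟨⟨x, rfl⟩, ?_⟩
  rintro Y ⟨y, hy, hyY⟩ _ z hz
  rw [Set.mem_singleton_iff] at hy hz
  subst hy; subst hz; exact hyY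

theorem conn_mono {G G' : SimpleGraph W} (h : G ≤ G') {X : Set W}
    (hX : (G.induce X).Connected) : (G'.induce X).Connected := by
  rw [conn_iff] at *
  refine ⟨hX.1, fun Y hY hcl => hX.2 Y hY fun a ha haY b hb hab => hcl a ha haY b hb (h hab)⟩

/-- The union of two connected sets that meet or are joined by an edge. -/
theorem conn_union {G : SimpleGraph W} {X Z : Set W}
    (hX : (G.induce X).Connected) (hZ : (G.induce Z).Connected) {a b : W}
    (ha : a ∈ X) (hb : b ∈ Z) (hab : a = b ∨ G.Adj a b) : (G.induce (X ∪ Z)).Connected := by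
  rw [conn_iff] at *
  refine ⟨⟨a, Or.inl ha⟩, ?_⟩
  rintro Y ⟨y, hy, hyY⟩ hcl
  have hX' : (∃ y ∈ X, y ∈ Y) → X ⊆ Y := fun h => hX.2 Y h
    fun p hp hpY q hq => hcl p (Or.inl hp) hpY q (Or.inl hq)
  have hZ' : (∃ y ∈ Z, y ∈ Y) → Z ⊆ Y := fun h => hZ.2 Y h
    fun p hp hpY q hq => hcl p (Or.inr hp) hpY q (Or.inr hq)
  have h1 : a ∈ Y → b ∈ Y := by
    intro h
    rcases hab with rfl | hab
    · exact h
    · exact hcl a (Or.inl ha) h b (Or.inr hb) hab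
  have h2 : b ∈ Y → a ∈ Y := by
    intro h
    rcases hab with rfl | hab
    · exact h
    · exact hcl b (Or.inr hb) h a (Or.inl ha) hab.symm
  rcases hy with hy | hy
  · have hXY := hX' ⟨y, hy, hyY⟩
    exact Set.union_subset hXY (hZ' ⟨b, hb, h1 (hXY ha)⟩)
  · have hZY := hZ' ⟨y, hy, hyY⟩
    exact Set.union_subset (hX' ⟨a, ha, h2 (hZY hb)⟩) hZY

/-- Edges of `G` with both ends in `C`. -/
def restr (G : SimpleGraph W) (C : Set W) : SimpleGraph W where
  Adj a b := G.Adj a b ∧ a ∈ C ∧ b ∈ C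
  symm := ⟨fun _ _ h => ⟨h.1.symm, h.2.2, h.2.1⟩⟩
  loopless := ⟨fun _ h => G.loopless.irrefl _ h.1⟩

theorem restr_le (G : SimpleGraph W) (C : Set W) : restr G C ≤ G := fun _ _ h => h.1

theorem restr_conn_subset {G : SimpleGraph W} {C X : Set W}
    (hX : ((restr G C).induce X).Connected) {s : W} (hs : s ∈ X) (hsC : s ∈ C) : X ⊆ C := by
  rw [conn_iff] at hX
  exact hX.2 C ⟨s, hs, hsC⟩ fun a _ _ b _ hab => hab.2.2

/-- `S` is linked to `T` by disjoint connected sets. -/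
def Linked (G : SimpleGraph W) (S T : Set W) (f : W → Set W) : Prop :=
  (∀ s ∈ S, s ∈ f s) ∧ (∀ s ∈ S, (G.induce (f s)).Connected) ∧
    (∀ s ∈ S, ∃ t ∈ T, t ∈ f s) ∧
    (∀ s ∈ S, ∀ r ∈ S, ∀ z, z ∈ f s → z ∈ f r → s = r)

/-- The end map of a linkage between sets of the same size. -/
theorem Linked.ends [Finite W] {G : SimpleGraph W} {S T : Set W} {f : W → Set W}
    (h : Linked G S T f) (hc : T.ncard ≤ S.ncard) :
    ∃ τ : W → W, Set.BijOn τ S T ∧ (∀ s ∈ S, τ s ∈ f s) ∧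
      (∀ s ∈ S, ∀ z ∈ T, z ∈ f s → z = τ s) := by
  classical
  obtain ⟨h1, h2, h3, h4⟩ := h
  choose! τ hτ using h3
  have hmaps : Set.MapsTo τ S T := fun s hs => (hτ s hs).1
  have hinj : Set.InjOn τ S := fun s hs s' hs' he =>
    h4 s hs s' hs' (τ s) (hτ s hs).2 (he ▸ (hτ s' hs').2)
  have himg : τ '' S = T := by
    apply Set.eq_of_subset_of_ncard_le hmaps.image_subset _ (Set.toFinite _)
    rwa [hinj.ncard_image]
  refine ⟨τ, ⟨hmaps, hinj, himg.symm.subset⟩, fun s hs => (hτ s hs).2, ?_⟩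
  intro s hs z hz hzs
  rw [← himg] at hz
  obtain ⟨s', hs', rfl⟩ := hz
  have heq := h4 s hs s' hs' _ hzs (hτ s' hs').2
  exact congrArg τ heq.symm

/-- Menger's theorem, in terms of disjoint connected sets. -/
theorem menger [Finite W] (G : SimpleGraph W) : ∀ S T : Set W,
    (∀ A B, IsSeparation G A B → S ⊆ A → T ⊆ B → S.ncard ≤ (A ∩ B).ncard) →
    ∃ f, Linked G S T f := by
  classical
  induction G using WellFoundedLT.induction with
  | ind G ih =>
  intro S T hsep
  by_cases hE : ∃ x y, G.Adj x y
  swap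
  · have hST : S ⊆ T := by
      have := hsep S (Sᶜ ∪ T) ⟨by ext z; simp; tauto, fun a _ b _ h => hE ⟨a, b, h⟩⟩
        subset_rfl Set.subset_union_right
      have h2 : S ∩ (Sᶜ ∪ T) = S := Set.eq_of_subset_of_ncard_le Set.inter_subset_left this
      intro z hz
      rw [← h2] at hz
      rcases hz.2 with h | h
      · exact absurd hz.1 h
      · exact h
    exact ⟨fun s => {s}, fun s _ => rfl, fun s _ => conn_singleton G s,
      fun s hs => ⟨s, hST hs, rfl⟩, fun s _ s' _ z hz hz' => by
        rw [Set.mem_singleton_iff] at hz hz'; rw [← hz, ← hz']⟩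
  obtain ⟨x₀, y₀, hxy₀⟩ := hE
  have hle : G.deleteEdges {s(x₀, y₀)} ≤ G := deleteEdges_le _
  have hlt : G.deleteEdges {s(x₀, y₀)} < G := by
    refine lt_of_le_of_ne hle fun he => ?_
    rw [← he] at hxy₀
    simp at hxy₀
  by_cases hred : ∀ A B, IsSeparation (G.deleteEdges {s(x₀, y₀)}) A B → S ⊆ A → T ⊆ B →
      S.ncard ≤ (A ∩ B).ncard
  · obtain ⟨f, h1, h2, h3, h4⟩ := ih _ hlt S T hred
    exact ⟨f, h1, fun s hs => conn_mono hle (h2 s hs), h3, h4⟩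
  push Not at hred
  obtain ⟨C, D, ⟨hCD, hno⟩, hSC, hTD, hord⟩ := hred
  have hns : ∃ x ∈ C \ D, ∃ y ∈ D \ C, G.Adj x y := by
    by_contra hcon
    push Not at hcon
    exact absurd (hsep C D ⟨hCD, hcon⟩ hSC hTD) (by omega)
  obtain ⟨x, hx, y, hy, hxy⟩ := hns
  have he : s(x₀, y₀) = s(x, y) := by
    have := hno x hx y hy
    rw [deleteEdges_adj] at this
    simp only [Set.mem_singleton_iff, not_and, not_not] at this
    exact (this hxy).symm
  rw [he] at hle hlt hno
  set G' := G.deleteEdges {s(x, y)} with hG'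
  have hadj : ∀ u v, G.Adj u v → G'.Adj u v ∨ (u = x ∧ v = y) ∨ (u = y ∧ v = x) := by
    intro u v huv
    rw [hG', deleteEdges_adj]
    by_cases h : s(u, v) = s(x, y)
    · right; simpa using h
    · left; exact ⟨huv, h⟩
  have hmem : ∀ z, z ∈ C ∨ z ∈ D := fun z => by
    have : z ∈ C ∪ D := hCD ▸ Set.mem_univ z
    exact this
  have hk : S.ncard ≤ (C ∩ D).ncard + 1 := by
    have := hsep (insert y C) D ⟨by rw [Set.insert_union, hCD]; simp, by
      rintro a ⟨ha, haD⟩ b ⟨hb, hbC⟩ hab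
      rcases ha with rfl | ha
      · exact haD hy.1
      · rw [Set.mem_insert_iff, not_or] at hbC
        rcases hadj a b hab with h | h | h
        · exact hno a ⟨ha, haD⟩ b ⟨hb, hbC.2⟩ h
        · exact hbC.1 h.2
        · exact haD (h.1 ▸ hy.1)⟩ (hSC.trans (Set.subset_insert _ _)) hTD
    have h2 : (insert y C ∩ D) ⊆ insert y (C ∩ D) := by
      rintro z ⟨rfl | hz, hz'⟩
      · exact Or.inl rfl
      · exact Or.inr ⟨hz, hz'⟩
    have h3 := Set.ncard_le_ncard h2
    have h4 := Set.ncard_insert_le y (C ∩ D)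
    omega
  have hPc : (insert x (C ∩ D)).ncard = S.ncard := by
    rw [Set.ncard_insert_of_notMem (fun h => hx.2 h.2)]; omega
  have hQc : (insert y (C ∩ D)).ncard = S.ncard := by
    rw [Set.ncard_insert_of_notMem (fun h => hy.2 h.1)]; omega
  obtain ⟨f, hf⟩ := ih (restr G' C) (lt_of_le_of_lt (restr_le _ _) hlt) S (insert x (C ∩ D)) (by
    rintro E F ⟨hEF, hnoEF⟩ hSE hPF
    have hmEF : ∀ z, z ∈ E ∨ z ∈ F := fun z => by
      have : z ∈ E ∪ F := hEF ▸ Set.mem_univ z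
      exact this
    have hxF : x ∈ F := hPF (Or.inl rfl)
    have hcdF : ∀ z, z ∈ C → z ∈ D → z ∈ F := fun z h1 h2 => hPF (Or.inr ⟨h1, h2⟩)
    have := hsep (E ∩ C) (F ∪ D) ⟨by
        ext z; simp only [Set.mem_union, Set.mem_inter_iff, Set.mem_univ, iff_true]
        have := hmem z; have := hmEF z; tauto, by
        rintro u ⟨⟨huE, huC⟩, hu⟩ v ⟨hv, hv'⟩ huv
        simp only [Set.mem_union, not_or] at hu
        have hv2 : v ∈ E → v ∉ C := fun h1 h2 => hv' ⟨h1, h2⟩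
        rcases hadj u v huv with h | h | h
        · have hvC : v ∈ C := by
            by_contra hvC
            exact hno u ⟨huC, hu.2⟩ v ⟨(hmem v).resolve_left hvC, hvC⟩ h
          have hvE : v ∉ E := fun h => hv2 h hvC
          exact hnoEF u ⟨huE, hu.1⟩ v ⟨(hmEF v).resolve_left hvE, hvE⟩ ⟨h, huC, hvC⟩
        · exact hu.1 (h.1 ▸ hxF)
        · exact hy.2 (h.1 ▸ huC)⟩ (Set.subset_inter hSE hSC)
        (hTD.trans Set.subset_union_right)
    refine this.trans (Set.ncard_le_ncard ?_)
    rintro z ⟨⟨hzE, hzC⟩, hz | hz⟩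
    · exact ⟨hzE, hz⟩
    · exact ⟨hzE, hcdF z hzC hz⟩)
  obtain ⟨g, hg⟩ := ih (restr G' D) (lt_of_le_of_lt (restr_le _ _) hlt) (insert y (C ∩ D)) T (by
    rintro E F ⟨hEF, hnoEF⟩ hQE hTF
    have hmEF : ∀ z, z ∈ E ∨ z ∈ F := fun z => by
      have : z ∈ E ∪ F := hEF ▸ Set.mem_univ z
      exact this
    have hyE : y ∈ E := hQE (Or.inl rfl)
    have hcdE : ∀ z, z ∈ C → z ∈ D → z ∈ E := fun z h1 h2 => hQE (Or.inr ⟨h1, h2⟩)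
    have := hsep (C ∪ E) (D ∩ F) ⟨by
        ext z; simp only [Set.mem_union, Set.mem_inter_iff, Set.mem_univ, iff_true]
        have := hmem z; have := hmEF z; tauto, by
        rintro u ⟨hu, hu'⟩ v ⟨⟨hvD, hvF⟩, hv⟩ huv
        simp only [Set.mem_union, not_or] at hv
        have hu2 : u ∈ D → u ∉ F := fun h1 h2 => hu' ⟨h1, h2⟩
        rcases hadj u v huv with h | h | h
        · have huD : u ∈ D := by
            by_contra huD
            exact hno u ⟨(hmem u).resolve_right huD, huD⟩ v ⟨hvD, hv.1⟩ h
          have huF : u ∉ F := hu2 huD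
          exact hnoEF u ⟨(hmEF u).resolve_right huF, huF⟩ v ⟨hvF, hv.2⟩ ⟨h, huD, hvD⟩
        · exact hv.2 (h.2 ▸ hyE)
        · exact hx.2 (h.2 ▸ hvD)⟩ (hSC.trans Set.subset_union_left)
        (Set.subset_inter hTD hTF)
    rw [hQc]
    refine this.trans (Set.ncard_le_ncard ?_)
    rintro z ⟨hz | hz, hzD, hzF⟩
    · exact ⟨hcdE z hz hzD, hzF⟩
    · exact ⟨hz, hzF⟩)
  obtain ⟨τ, hτ, hτf, hτu⟩ := hf.ends hPc.le
  obtain ⟨f1, f2, f3, f4⟩ := hf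
  obtain ⟨g1, g2, g3, g4⟩ := hg
  have hfC : ∀ s ∈ S, f s ⊆ C := fun s hs => restr_conn_subset (f2 s hs) (f1 s hs) (hSC hs)
  have hgD : ∀ q ∈ insert y (C ∩ D), g q ⊆ D := fun q hq =>
    restr_conn_subset (g2 q hq) (g1 q hq) (by
      rcases hq with rfl | hq
      · exact hy.1
      · exact hq.2)
  let σ : W → W := fun s => if τ s = x then y else τ s
  have hσ : ∀ s ∈ S, σ s ∈ insert y (C ∩ D) := by
    intro s hs
    by_cases h : τ s = x
    · simp [σ, h]
    · simp only [σ, h, if_false]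
      rcases hτ.mapsTo hs with h' | h'
      · exact absurd h' h
      · exact Or.inr h'
  have hσi : ∀ s ∈ S, ∀ s' ∈ S, σ s = σ s' → s = s' := by
    intro s hs s' hs' h
    apply hτ.injOn hs hs'
    have hne : ∀ s ∈ S, τ s ≠ y := by
      intro s hs h
      rcases hτ.mapsTo hs with h' | h'
      · rw [h] at h'; exact hx.2 (h' ▸ hy.1)
      · exact hy.2 (h ▸ h'.1)
    by_cases h1 : τ s = x <;> by_cases h2 : τ s' = x
    · rw [h1, h2]
    · simp only [σ, h1, h2, if_true, if_false] at h
      exact absurd h.symm (hne s' hs')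
    · simp only [σ, h1, h2, if_true, if_false] at h
      exact absurd h (hne s hs)
    · simpa only [σ, h1, h2, if_false] using h
  have hcross : ∀ s ∈ S, ∀ s' ∈ S, ∀ z, z ∈ f s → z ∈ g (σ s') → s = s' := by
    intro s hs s' hs' z hz hz'
    have hzC := hfC s hs hz
    have hzD := hgD _ (hσ s' hs') hz'
    have h1 : z = τ s := hτu s hs z (Or.inr ⟨hzC, hzD⟩) hz
    have hzQ : z ∈ insert y (C ∩ D) := Or.inr ⟨hzC, hzD⟩
    have h2 : z = σ s' := g4 z hzQ _ (hσ s' hs') z (g1 z hzQ) hz'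
    apply hσi s hs s' hs'
    rw [← h2]
    have : τ s ≠ x := fun h => hx.2 (h ▸ h1 ▸ hzD)
    simp only [σ, this, if_false, h1]
  refine ⟨fun s => f s ∪ g (σ s), fun s hs => Or.inl (f1 s hs), ?_, ?_, ?_⟩
  · intro s hs
    refine conn_union (conn_mono ((restr_le _ _).trans hle) (f2 s hs))
      (conn_mono ((restr_le _ _).trans hle) (g2 _ (hσ s hs))) (hτf s hs) (g1 _ (hσ s hs)) ?_
    by_cases h : τ s = x
    · right; simp only [σ, h, if_true]; exact hxy
    · left; simp only [σ, h, if_false]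
  · intro s hs
    obtain ⟨t, ht, htg⟩ := g3 _ (hσ s hs)
    exact ⟨t, ht, Or.inr htg⟩
  · rintro s hs s' hs' z (hz | hz) (hz' | hz')
    · exact f4 s hs s' hs' z hz hz'
    · exact hcross s hs s' hs' z hz hz'
    · exact (hcross s' hs' s hs z hz' hz).symm
    · exact hσi s hs s' hs' (g4 _ (hσ s hs) _ (hσ s' hs') z hz hz')

end Helpers

section Main

variable {V W : Type*}

/-- Well-connectedness relative to a vertex set `U`. -/
def WCRel (G : SimpleGraph W) (U S : Set W) : Prop :=
  S ⊆ U ∧ (∃ w ∈ U, w ∉ S) ∧ ∀ A B : Set W, A ∪ B = U →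
    (∀ a ∈ A \ B, ∀ b ∈ B \ A, ¬ G.Adj a b) → (A \ B).Nonempty → (B \ A).Nonempty →
    S ⊆ A → S.ncard ≤ (A ∩ B).ncard

/-- The conclusion relative to a vertex set `U`. -/
def Good (H : SimpleGraph V) (G : SimpleGraph W) (U S : Set W) : Prop :=
  ∃ μ : Option V → Set W, IsMinorMap G (apexGraph H) μ ∧ (∀ v, μ v ⊆ U) ∧
    ∃ w : W, w ∉ S ∧ μ none = {w}

/-- The minor of `G` on the vertex set `U` obtained by contracting the sets `Q z`. -/
def minorGraph (G : SimpleGraph W) (U : Set W) (Q : W → Set W) : SimpleGraph W where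
  Adj a b := a ≠ b ∧ a ∈ U ∧ b ∈ U ∧ ∃ c ∈ Q a, ∃ d ∈ Q b, G.Adj c d
  symm := ⟨fun _ _ h => ⟨h.1.symm, h.2.2.1, h.2.1, by
    obtain ⟨c, hc, d, hd, hcd⟩ := h.2.2.2
    exact ⟨d, hd, c, hc, hcd.symm⟩⟩⟩
  loopless := ⟨fun _ h => h.1 rfl⟩

theorem minorGraph_adj {G : SimpleGraph W} {U : Set W} {Q : W → Set W}
    (hQ : ∀ z ∈ U, z ∈ Q z) {a b : W} (ha : a ∈ U) (hb : b ∈ U) (hab : G.Adj a b) :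
    (minorGraph G U Q).Adj a b :=
  ⟨hab.ne, ha, hb, a, hQ a ha, b, hQ b hb, hab⟩

theorem Good.transfer {H : SimpleGraph V} {G : SimpleGraph W} {U U' S S' : Set W}
    {Q : W → Set W} (hQm : ∀ z ∈ U', z ∈ Q z) (hQc : ∀ z ∈ U', (G.induce (Q z)).Connected)
    (hQU : ∀ z ∈ U', Q z ⊆ U)
    (hQd : ∀ z ∈ U', ∀ z' ∈ U', ∀ p, p ∈ Q z → p ∈ Q z' → z = z')
    (hQs : ∀ z ∈ U', z ∉ S' → Q z = {z} ∧ z ∉ S)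
    (h : Good H (minorGraph G U' Q) U' S') : Good H G U S := by
  obtain ⟨μ, ⟨m1, m2, m3⟩, hU, w, hw, hμw⟩ := h
  refine ⟨fun v => {p | ∃ z ∈ μ v, p ∈ Q z}, ⟨?_, ?_, ?_⟩, ?_, w, ?_, ?_⟩
  · intro v
    have hm := m1 v
    rw [conn_iff] at hm ⊢
    obtain ⟨⟨z, hz⟩, hm⟩ := hm
    refine ⟨⟨z, z, hz, hQm z (hU v hz)⟩, ?_⟩
    rintro Y ⟨y, ⟨z, hz, hyz⟩, hyY⟩ hcl
    have hin : ∀ z ∈ μ v, ∀ p ∈ Q z, p ∈ Y → Q z ⊆ Y := by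
      intro z hz p hp hpY
      exact ((conn_iff _ _).1 (hQc z (hU v hz))).2 Y ⟨p, hp, hpY⟩
        fun a ha haY b hb hab => hcl a ⟨z, hz, ha⟩ haY b ⟨z, hz, hb⟩ hab
    have := hm {z | Q z ⊆ Y} ⟨z, hz, hin z hz y hyz hyY⟩ (by
      rintro a ha haY b hb ⟨_, _, _, c, hc, d, hd, hcd⟩
      exact hin b hb d hd (hcl c ⟨a, ha, hc⟩ (haY hc) d ⟨b, hb, hd⟩ hcd))
    rintro p ⟨z, hz, hp⟩
    exact this hz hp
  · intro v v' hv
    rw [Set.disjoint_left]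
    rintro p ⟨z, hz, hp⟩ ⟨z', hz', hp'⟩
    have := hQd z (hU v hz) z' (hU v' hz') p hp hp'
    subst this
    exact Set.disjoint_left.1 (m2 hv) hz hz'
  · intro v v' hv
    obtain ⟨a, ha, b, hb, _, _, _, c, hc, d, hd, hcd⟩ := m3 hv
    exact ⟨c, ⟨a, ha, hc⟩, d, ⟨b, hb, hd⟩, hcd⟩
  · rintro v p ⟨z, hz, hp⟩
    exact hQU z (hU v hz) hp
  · exact (hQs w (hU none (by rw [hμw]; rfl)) hw).2
  · have := (hQs w (hU none (by rw [hμw]; rfl)) hw).1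
    ext p
    simp [hμw, this]

/-- Reduction to one side of a separation of order `|S|`. -/
theorem side_step [Fintype V] [Finite W] {H : SimpleGraph V} {G : SimpleGraph W} {U S A B : Set W}
    {n : ℕ} {P : Set V} {φ : V → W} (hwc : WCRel G U S)
    (hdeg : ∀ w ∈ U, w ∉ S → n ≤ (G.neighborSet w ∩ U).ncard)
    (hφ : Set.BijOn φ P S) (hadj : ∀ x ∈ P, ∀ y ∈ P, H.Adj x y → G.Adj (φ x) (φ y))
    (hAB : A ∪ B = U) (hno : ∀ a ∈ A \ B, ∀ b ∈ B \ A, ¬ G.Adj a b) (hA : (A \ B).Nonempty)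
    (hB : (B \ A).Nonempty) (hSA : S ⊆ A) (hord : (A ∩ B).ncard ≤ S.ncard) :
    ∃ G' : SimpleGraph W, ∃ U' S' : Set W, ∃ φ' : V → W,
      U'.ncard < U.ncard ∧ S'.ncard = S.ncard ∧ WCRel G' U' S' ∧
      (∀ w ∈ U', w ∉ S' → n ≤ (G'.neighborSet w ∩ U').ncard) ∧
      Set.BijOn φ' P S' ∧ (∀ x ∈ P, ∀ y ∈ P, H.Adj x y → G'.Adj (φ' x) (φ' y)) ∧
      (Good H G' U' S' → Good H G U S) := by
  classical
  obtain ⟨hSU, ⟨w₀, hw₀, hw₀S⟩, hw⟩ := hwc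
  have hAU : A ⊆ U := hAB ▸ Set.subset_union_left
  have hBU : B ⊆ U := hAB ▸ Set.subset_union_right
  have hcard : (A ∩ B).ncard = S.ncard := le_antisymm hord (hw A B hAB hno hA hB hSA)
  obtain ⟨f, hf⟩ := menger (restr G A) S (A ∩ B) (by
    rintro C D ⟨hCD, hnoCD⟩ hSC hTD
    have hm : ∀ z, z ∈ C ∨ z ∈ D := fun z => by
      have : z ∈ C ∪ D := hCD ▸ Set.mem_univ z
      exact this
    have hsub : (A ∩ C) ∩ ((A ∩ D) ∪ B) ⊆ C ∩ D := by
      rintro z ⟨⟨hzA, hzC⟩, hz | hz⟩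
      · exact ⟨hzC, hz.2⟩
      · exact ⟨hzC, hTD ⟨hzA, hz⟩⟩
    by_cases hne : ((A ∩ C) \ ((A ∩ D) ∪ B)).Nonempty
    · refine (hw (A ∩ C) ((A ∩ D) ∪ B) ?_ ?_ hne ?_ (Set.subset_inter hSA hSC)).trans
        (Set.ncard_le_ncard hsub)
      · rw [← hAB]
        ext z
        have := hm z
        simp only [Set.mem_union, Set.mem_inter_iff]
        tauto
      · rintro u ⟨⟨huA, huC⟩, hu⟩ v ⟨hv, hv'⟩ huv
        simp only [Set.mem_union, Set.mem_inter_iff, not_or, not_and] at hu hv'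
        by_cases hvA : v ∈ A
        · have hvC := hv' hvA
          exact hnoCD u ⟨huC, hu.1 huA⟩ v ⟨(hm v).resolve_left hvC, hvC⟩ ⟨huv, huA, hvA⟩
        · have hvB : v ∈ B := hv.resolve_left fun h => hvA h.1
          exact hno u ⟨huA, hu.2⟩ v ⟨hvB, hvA⟩ huv
      · obtain ⟨b, hb, hbA⟩ := hB
        exact ⟨b, Or.inr hb, fun h => hbA h.1⟩
    · refine Set.ncard_le_ncard (fun s hs => hsub ⟨⟨hSA hs, hSC hs⟩, ?_⟩)
      by_contra h
      exact hne ⟨s, ⟨hSA hs, hSC hs⟩, h⟩)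
  obtain ⟨τ, hτ, hτf, hτu⟩ := hf.ends hord
  obtain ⟨f1, f2, f3, f4⟩ := hf
  have hfA : ∀ s ∈ S, f s ⊆ A := fun s hs => restr_conn_subset (f2 s hs) (f1 s hs) (hSA hs)
  let ρ : W → W := fun z => if h : ∃ s ∈ S, τ s = z then h.choose else z
  have hρ : ∀ z ∈ A ∩ B, ρ z ∈ S ∧ τ (ρ z) = z := by
    intro z hz
    have h : ∃ s ∈ S, τ s = z := hτ.surjOn hz
    simp only [ρ, h, dif_pos]
    exact h.choose_spec
  have hρτ : ∀ s ∈ S, ρ (τ s) = s := by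
    intro s hs
    have := hρ _ (hτ.mapsTo hs)
    exact hτ.injOn this.1 hs this.2
  let Q : W → Set W := fun z => if z ∈ A ∩ B then f (ρ z) else {z}
  have hQ1 : ∀ z ∈ A ∩ B, Q z = f (ρ z) := fun z hz => by simp only [Q, hz, if_true]
  have hQ2 : ∀ z, z ∉ A ∩ B → Q z = {z} := fun z hz => by simp only [Q, hz, if_false]
  have hQτ : ∀ s ∈ S, Q (τ s) = f s := fun s hs => by rw [hQ1 _ (hτ.mapsTo hs), hρτ s hs]
  have hQm : ∀ z ∈ B, z ∈ Q z := by
    intro z hz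
    by_cases h : z ∈ A ∩ B
    · rw [hQ1 z h]
      have := hτf _ (hρ z h).1
      rwa [(hρ z h).2] at this
    · rw [hQ2 z h]; rfl
  refine ⟨minorGraph G B Q, B, A ∩ B, fun v => τ (φ v), ?_, hcard, ⟨Set.inter_subset_right, ?_, ?_⟩,
    ?_, hτ.comp hφ, ?_, ?_⟩
  · obtain ⟨a, ha, haB⟩ := hA
    exact Set.ncard_lt_ncard ⟨hBU, fun h => haB (h (hAU ha))⟩
  · obtain ⟨b, hb, hbA⟩ := hB
    exact ⟨b, hb, fun h => hbA h.1⟩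
  · intro A' B' hAB' hno' hA' hB' hS'
    have hA'B : A' ⊆ B := hAB' ▸ Set.subset_union_left
    have hB'B : B' ⊆ B := hAB' ▸ Set.subset_union_right
    rw [hcard]
    refine (hw (A ∪ A') B' ?_ ?_ ?_ ?_ (hSA.trans Set.subset_union_left)).trans
      (Set.ncard_le_ncard ?_)
    · rw [Set.union_assoc, hAB', hAB]
    · rintro u ⟨hu, huB'⟩ v ⟨hvB', hv⟩ huv
      simp only [Set.mem_union, not_or] at hv
      by_cases huA' : u ∈ A'
      · exact hno' u ⟨huA', huB'⟩ v ⟨hvB', hv.2⟩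
          (minorGraph_adj hQm (hA'B huA') (hB'B hvB') huv)
      · have huA : u ∈ A := hu.resolve_right huA'
        exact hno u ⟨huA, fun h => huA' (hS' ⟨huA, h⟩)⟩ v ⟨hB'B hvB', hv.1⟩ huv
    · obtain ⟨a, ha, ha'⟩ := hA'
      exact ⟨a, Or.inr ha, ha'⟩
    · obtain ⟨b, hb, hb'⟩ := hB'
      refine ⟨b, hb, ?_⟩
      rintro (h | h)
      · exact hb' (hS' ⟨h, hB'B hb⟩)
      · exact hb' h
    · rintro z ⟨hz | hz, hz'⟩
      · exact ⟨hS' ⟨hz, hB'B hz'⟩, hz'⟩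
      · exact ⟨hz, hz'⟩
  · intro w hwB hwS
    have hwA : w ∉ A := fun h => hwS ⟨h, hwB⟩
    refine (hdeg w (hBU hwB) (fun h => hwA (hSA h))).trans (Set.ncard_le_ncard ?_)
    rintro z ⟨hz, hzU⟩
    have hzB : z ∈ B := by
      by_contra hzB
      have hzA : z ∈ A := by
        rw [← hAB] at hzU
        exact hzU.resolve_right hzB
      exact hno z ⟨hzA, hzB⟩ w ⟨hwB, hwA⟩ (G.symm.symm _ _ hz)
    exact ⟨minorGraph_adj hQm hwB hzB hz, hzB⟩
  · intro x hx y hy hxy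
    have hxS := hφ.mapsTo hx
    have hyS := hφ.mapsTo hy
    refine ⟨fun h => hxy.ne (hφ.injOn hx hy (hτ.injOn hxS hyS h)), (hτ.mapsTo hxS).2,
      (hτ.mapsTo hyS).2, φ x, ?_, φ y, ?_, hadj x hx y hy hxy⟩
    · rw [hQτ _ hxS]; exact f1 _ hxS
    · rw [hQτ _ hyS]; exact f1 _ hyS
  · intro h
    refine h.transfer hQm ?_ ?_ ?_ ?_
    · intro z _
      by_cases h : z ∈ A ∩ B
      · rw [hQ1 z h]; exact conn_mono (restr_le _ _) (f2 _ (hρ z h).1)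
      · rw [hQ2 z h]; exact conn_singleton G z
    · intro z hz
      by_cases h : z ∈ A ∩ B
      · rw [hQ1 z h]; exact (hfA _ (hρ z h).1).trans hAU
      · rw [hQ2 z h]; exact Set.singleton_subset_iff.2 (hBU hz)
    · intro z hz z' hz' p hp hp'
      by_cases h : z ∈ A ∩ B <;> by_cases h' : z' ∈ A ∩ B
      · rw [hQ1 z h] at hp
        rw [hQ1 z' h'] at hp'
        rw [← (hρ z h).2, ← (hρ z' h').2, f4 _ (hρ z h).1 _ (hρ z' h').1 p hp hp']
      · rw [hQ1 z h] at hp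
        rw [hQ2 z' h', Set.mem_singleton_iff] at hp'
        exact absurd ⟨hp' ▸ hfA _ (hρ z h).1 hp, hz'⟩ h'
      · rw [hQ2 z h, Set.mem_singleton_iff] at hp
        rw [hQ1 z' h'] at hp'
        exact absurd ⟨hp ▸ hfA _ (hρ z' h').1 hp', hz⟩ h
      · rw [hQ2 z h, Set.mem_singleton_iff] at hp
        rw [hQ2 z' h', Set.mem_singleton_iff] at hp'
        rw [← hp, ← hp']
    · intro z hz hzn
      exact ⟨hQ2 z hzn, fun h => hzn ⟨hSA h, hz⟩⟩

/-- The case where `S` already carries all of `H`. -/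
theorem final_step [Finite W] {H : SimpleGraph V} {G : SimpleGraph W} {U S : Set W}
    {φ : V → W} (hwc : WCRel G U S)
    (hφ : Set.BijOn φ Set.univ S) (hadj : ∀ x y, H.Adj x y → G.Adj (φ x) (φ y)) :
    Good H G U S := by
  classical
  obtain ⟨hSU, ⟨w, hwU, hwS⟩, hw⟩ := hwc
  obtain ⟨f, f1, f2, f3, f4⟩ := menger (restr G (U \ {w})) S (G.neighborSet w ∩ U) (by
    rintro C D ⟨hCD, hnoCD⟩ hSC hTD
    have hm : ∀ z, z ∈ C ∨ z ∈ D := fun z => by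
      have : z ∈ C ∪ D := hCD ▸ Set.mem_univ z
      exact this
    have hsub : ((C ∩ U) \ {w}) ∩ (insert w (D ∩ U)) ⊆ C ∩ D := by
      rintro z ⟨⟨⟨hzC, hzU⟩, hzw⟩, hz | hz⟩
      · exact absurd hz hzw
      · exact ⟨hzC, hz.1⟩
    have hS' : S ⊆ (C ∩ U) \ {w} := fun s hs => ⟨⟨hSC hs, hSU hs⟩, by
      rintro rfl; exact hwS hs⟩
    by_cases hne : (((C ∩ U) \ {w}) \ (insert w (D ∩ U))).Nonempty
    · refine (hw ((C ∩ U) \ {w}) (insert w (D ∩ U)) ?_ ?_ hne ?_ hS').trans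
        (Set.ncard_le_ncard hsub)
      · ext z
        have := hm z
        by_cases hzw : z = w
        · subst hzw; simp [hwU]
        · simp [hzw]; tauto
      · rintro u ⟨⟨⟨huC, huU⟩, huw⟩, hu⟩ v ⟨hv, hv'⟩ huv
        simp only [Set.mem_insert_iff, Set.mem_inter_iff, not_or, not_and] at hu
        rcases hv with rfl | hv
        · exact hu.2 (hTD ⟨huv.symm, huU⟩) huU
        · by_cases hvw : v = w
          · subst hvw
            exact hu.2 (hTD ⟨huv.symm, huU⟩) huU
          have hvC : v ∉ C := fun h => hv' ⟨⟨h, hv.2⟩, hvw⟩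
          exact hnoCD u ⟨huC, fun h => hu.2 h huU⟩ v ⟨hv.1, hvC⟩ ⟨huv, ⟨huU, huw⟩, hv.2, hvw⟩
      · exact ⟨w, Or.inl rfl, fun h => h.2 rfl⟩
    · refine Set.ncard_le_ncard (fun s hs => hsub ⟨hS' hs, ?_⟩)
      by_contra h
      exact hne ⟨s, hS' hs, h⟩)
  have hfU : ∀ s ∈ S, f s ⊆ U \ {w} := fun s hs => restr_conn_subset (f2 s hs) (f1 s hs)
    ⟨hSU hs, by rintro rfl; exact hwS hs⟩
  have hφS : ∀ v, φ v ∈ S := fun v => hφ.mapsTo (Set.mem_univ v)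
  refine ⟨fun o => o.elim {w} (fun v => f (φ v)), ⟨?_, ?_, ?_⟩, ?_, w, hwS, rfl⟩
  · rintro (_ | v)
    · exact conn_singleton G w
    · exact conn_mono (restr_le _ _) (f2 _ (hφS v))
  · rintro (_ | v) (_ | v') hne
    · exact absurd rfl hne
    · exact Set.disjoint_singleton_left.2 fun h => (hfU _ (hφS v') h).2 rfl
    · exact Set.disjoint_singleton_right.2 fun h => (hfU _ (hφS v) h).2 rfl
    · refine Set.disjoint_left.2 fun z hz hz' => hne ?_
      rw [hφ.injOn (Set.mem_univ v) (Set.mem_univ v') (f4 _ (hφS v) _ (hφS v') z hz hz')]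
  · rintro (_ | v) (_ | v') h
    · exact absurd rfl h.ne
    · obtain ⟨t, ht, htf⟩ := f3 _ (hφS v')
      exact ⟨w, rfl, t, htf, ht.1⟩
    · obtain ⟨t, ht, htf⟩ := f3 _ (hφS v)
      exact ⟨t, htf, w, rfl, G.symm.symm _ _ ht.1⟩
    · have hvv : H.Adj v v' := by
        simp only [apexGraph, fromRel_adj] at h
        simp only [Option.some.injEq, reduceCtorEq, false_or] at h
        rcases h.2 with ⟨u, u', rfl, rfl, h⟩ | ⟨u, u', rfl, rfl, h⟩
        · exact h
        · exact h.symm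
      exact ⟨φ v, f1 _ (hφS v), φ v', f1 _ (hφS v'), hadj v v' hvv⟩
  · rintro (_ | v)
    · exact Set.singleton_subset_iff.2 hwU
    · exact (hfU _ (hφS v)).trans Set.sdiff_subset

/-- Contracting an edge inside `S` whose ends have no common neighbour outside `S`. -/
theorem contract_step_s10 [Finite W] {H : SimpleGraph V} {G : SimpleGraph W} {U S : Set W}
    {n : ℕ} {P P' : Set V} {φ : V → W} (hwc : WCRel G U S)
    (hdeg : ∀ w ∈ U, w ∉ S → n ≤ (G.neighborSet w ∩ U).ncard)
    (hφ : Set.BijOn φ P S) (hadj : ∀ x ∈ P, ∀ y ∈ P, H.Adj x y → G.Adj (φ x) (φ y))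
    {a b : V} (ha : a ∈ P) (hb : b ∈ P) (hab : H.Adj a b)
    (hcom : ∀ w ∈ U, w ∉ S → G.Adj (φ a) w → G.Adj (φ b) w → False)
    (ψ : (H.induce P') ≃g contractOn H P a b) :
    ∃ G' : SimpleGraph W, ∃ U' S' : Set W, ∃ φ' : V → W,
      U'.ncard + 1 = U.ncard ∧ S'.ncard + 1 = S.ncard ∧ WCRel G' U' S' ∧
      (∀ w ∈ U', w ∉ S' → n ≤ (G'.neighborSet w ∩ U').ncard) ∧
      Set.BijOn φ' P' S' ∧ (∀ x ∈ P', ∀ y ∈ P', H.Adj x y → G'.Adj (φ' x) (φ' y)) ∧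
      (Good H G' U' S' → Good H G U S) := by
  classical
  obtain ⟨hSU, ⟨w₀, hw₀, hw₀S⟩, hw⟩ := hwc
  have hxS : φ a ∈ S := hφ.mapsTo ha
  have hyS : φ b ∈ S := hφ.mapsTo hb
  have hxy : G.Adj (φ a) (φ b) := hadj a ha b hb hab
  generalize hx : φ a = x at hxS hxy hcom
  generalize hy : φ b = y at hyS hxy hcom
  let Q : W → Set W := fun z => if z = x then {x, y} else {z}
  have hQ1 : Q x = {x, y} := by simp [Q]
  have hQ2 : ∀ z, z ≠ x → Q z = {z} := fun z hz => by simp [Q, hz]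
  have hQm : ∀ z ∈ U \ {y}, z ∈ Q z := by
    intro z _
    by_cases h : z = x
    · subst h; rw [hQ1]; exact Or.inl rfl
    · rw [hQ2 z h]; rfl
  have hSc : (S \ {y}).ncard + 1 = S.ncard := Set.ncard_sdiff_singleton_add_one hyS
  let φ' : V → W := fun v => if h : v ∈ P' then φ (ψ ⟨v, h⟩) else x
  have hφ' : ∀ v (h : v ∈ P'), φ' v = φ (ψ ⟨v, h⟩) := fun v h => by simp [φ', h]
  refine ⟨minorGraph G (U \ {y}) Q, U \ {y}, S \ {y}, φ',
    Set.ncard_sdiff_singleton_add_one (hSU hyS), hSc,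
    ⟨Set.sdiff_subset_sdiff_left hSU, ⟨w₀, ⟨hw₀, ?_⟩, fun h => hw₀S h.1⟩, ?_⟩, ?_, ⟨?_, ?_, ?_⟩, ?_, ?_⟩
  · rintro rfl; exact hw₀S hyS
  · intro A B hAB hno hA hB hS
    have hAU : A ⊆ U \ {y} := hAB ▸ Set.subset_union_left
    have hBU : B ⊆ U \ {y} := hAB ▸ Set.subset_union_right
    have h1 := hw (insert y A) (insert y B) (by
        rw [← Set.insert_union_distrib, hAB, Set.insert_sdiff_singleton,
          Set.insert_eq_of_mem (hSU hyS)]) (by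
        rintro u ⟨hu, hu'⟩ v ⟨hv, hv'⟩ huv
        simp only [Set.mem_insert_iff, not_or] at hu hu' hv hv'
        have huA := hu.resolve_left hu'.1
        have hvB := hv.resolve_left hv'.1
        exact hno u ⟨huA, hu'.2⟩ v ⟨hvB, hv'.2⟩ (minorGraph_adj hQm (hAU huA) (hBU hvB) huv)) (by
        obtain ⟨u, hu, hu'⟩ := hA
        refine ⟨u, Or.inr hu, ?_⟩
        rintro (h | h)
        · exact (hAU hu).2 h
        · exact hu' h) (by
        obtain ⟨u, hu, hu'⟩ := hB
        refine ⟨u, Or.inr hu, ?_⟩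
        rintro (h | h)
        · exact (hBU hu).2 h
        · exact hu' h) (by
        intro s hs
        by_cases h : s = y
        · exact Or.inl h
        · exact Or.inr (hS ⟨hs, h⟩))
    rw [← Set.insert_inter_distrib] at h1
    have h2 := Set.ncard_insert_le y (A ∩ B)
    omega
  · rintro w ⟨hwU, hwy⟩ hwS'
    have hwS : w ∉ S := fun h => hwS' ⟨h, hwy⟩
    have hwx : w ≠ x := by rintro rfl; exact hwS hxS
    refine (hdeg w hwU hwS).trans ?_
    by_cases h : G.Adj w y
    · have hnx : ¬ G.Adj x w := fun h' => hcom w hwU hwS h' h.symm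
      have hsub : insert x ((G.neighborSet w ∩ U) \ {y}) ⊆
          (minorGraph G (U \ {y}) Q).neighborSet w ∩ (U \ {y}) := by
        rintro z (rfl | ⟨⟨hz, hzU⟩, hzy⟩)
        · refine ⟨⟨hwx, ⟨hwU, hwy⟩, ⟨hSU hxS, hxy.ne⟩, w, hQm w ⟨hwU, hwy⟩, y, ?_, h⟩,
            ⟨hSU hxS, hxy.ne⟩⟩
          rw [hQ1]; exact Or.inr rfl
        · exact ⟨minorGraph_adj hQm ⟨hwU, hwy⟩ ⟨hzU, hzy⟩ hz, hzU, hzy⟩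
      refine le_trans ?_ (Set.ncard_le_ncard hsub)
      rw [Set.ncard_insert_of_notMem (fun hh => hnx (G.symm.symm _ _ hh.1.1)),
        Set.ncard_sdiff_singleton_add_one]
      exact ⟨h, hSU hyS⟩
    · refine Set.ncard_le_ncard ?_
      rintro z ⟨hz, hzU⟩
      have hzy : z ∉ ({y} : Set W) := by rintro rfl; exact h hz
      exact ⟨minorGraph_adj hQm ⟨hwU, hwy⟩ ⟨hzU, hzy⟩ hz, hzU, hzy⟩
  · intro v hv
    rw [hφ' v hv]
    have h2 := (ψ ⟨v, hv⟩).2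
    refine ⟨hφ.mapsTo h2.1, fun h => h2.2 ?_⟩
    rw [Set.mem_singleton_iff, ← hy] at h
    exact hφ.injOn h2.1 hb h
  · intro v hv v' hv' h
    rw [hφ' v hv, hφ' v' hv'] at h
    have h3 := hφ.injOn (ψ ⟨v, hv⟩).2.1 (ψ ⟨v', hv'⟩).2.1 h
    have h4 := ψ.injective (Subtype.ext h3)
    exact congrArg Subtype.val h4
  · rintro s ⟨hs, hsy⟩
    obtain ⟨v, hv, rfl⟩ := hφ.surjOn hs
    have hvb : v ∉ ({b} : Set V) := by
      rintro rfl
      exact hsy hy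
    obtain ⟨⟨u, hu⟩, hu'⟩ := ψ.surjective ⟨v, hv, hvb⟩
    refine ⟨u, hu, ?_⟩
    rw [hφ' u hu, hu']
  · intro u hu v hv huv
    have h1 : (contractOn H P a b).Adj (ψ ⟨u, hu⟩) (ψ ⟨v, hv⟩) := ψ.map_adj_iff.2 huv
    rw [hφ' u hu, hφ' v hv]
    generalize ψ ⟨u, hu⟩ = p at h1
    generalize ψ ⟨v, hv⟩ = q at h1
    have hmem : ∀ p : ↥(P \ {b}), φ p ∈ U \ {y} := fun p => ⟨hSU (hφ.mapsTo p.2.1), fun h => by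
      rw [Set.mem_singleton_iff, ← hy] at h
      exact p.2.2 (hφ.injOn p.2.1 hb h)⟩
    have key : ∀ p q : ↥(P \ {b}), p ≠ q → (H.Adj (p : V) (q : V) ∨ ((p : V) = a ∧ H.Adj b (q : V)) ∨
        ((q : V) = a ∧ H.Adj (p : V) b)) → (minorGraph G (U \ {y}) Q).Adj (φ p) (φ q) := by
      intro p q hpq h
      have hne : φ p ≠ φ q := fun h => hpq (Subtype.ext (hφ.injOn p.2.1 q.2.1 h))
      rcases h with h | ⟨h, h'⟩ | ⟨h, h'⟩
      · exact minorGraph_adj hQm (hmem p) (hmem q) (hadj _ p.2.1 _ q.2.1 h)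
      · refine ⟨hne, hmem p, hmem q, y, ?_, φ q, hQm _ (hmem q), ?_⟩
        · rw [h, hx, hQ1]; exact Or.inr rfl
        · rw [← hy]; exact hadj _ hb _ q.2.1 h'
      · refine ⟨hne, hmem p, hmem q, φ p, hQm _ (hmem p), y, ?_, ?_⟩
        · rw [h, hx, hQ1]; exact Or.inr rfl
        · rw [← hy]; exact hadj _ p.2.1 _ hb h'
    simp only [contractOn, fromRel_adj] at h1
    rcases h1.2 with h | h
    · exact key p q h1.1 h
    · exact (key q p h1.1.symm h).symm
  · intro h
    refine h.transfer hQm ?_ ?_ ?_ ?_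
    · intro z _
      by_cases h : z = x
      · subst h; rw [hQ1]
        exact conn_union (conn_singleton G z) (conn_singleton G y) rfl rfl (Or.inr hxy)
      · rw [hQ2 z h]; exact conn_singleton G z
    · intro z hz
      by_cases h : z = x
      · subst h; rw [hQ1]
        rintro p (rfl | rfl)
        · exact hz.1
        · exact hSU hyS
      · rw [hQ2 z h]; exact Set.singleton_subset_iff.2 hz.1
    · intro z hz z' hz' p hp hp'
      by_cases h : z = x <;> by_cases h' : z' = x
      · rw [h, h']
      · rw [h, hQ1] at hp
        rw [hQ2 z' h', Set.mem_singleton_iff] at hp'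
        subst hp'
        rcases hp with hp | hp
        · exact absurd hp h'
        · exact absurd hp hz'.2
      · rw [h', hQ1] at hp'
        rw [hQ2 z h, Set.mem_singleton_iff] at hp
        subst hp
        rcases hp' with hp | hp
        · exact absurd hp h
        · exact absurd hp hz.2
      · rw [hQ2 z h, Set.mem_singleton_iff] at hp
        rw [hQ2 z' h', Set.mem_singleton_iff] at hp'
        rw [← hp, ← hp']
    · intro z hz hzn
      have hzS : z ∉ S := fun h => hzn ⟨h, hz.2⟩
      exact ⟨hQ2 z (by rintro rfl; exact hzS hxS), hzS⟩

theorem mem_prevSet {t : ℕ} (ω : Fin t ≃ V) (i : Fin t) (k : ℕ) :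
    ω i ∈ prevSet ω k ↔ (i : ℕ) < k := by
  simp [prevSet]

theorem main_induction [Fintype V] [Finite W] (H : SimpleGraph V)
    (Ω : Set (Fin (Fintype.card V) ≃ V)) (hΩ : IsContractibleOrdering H Ω) :
    ∀ (n : ℕ) (G : SimpleGraph W) (U S : Set W), 2 * U.ncard < n + S.ncard → WCRel G U S →
      (∀ w ∈ U, w ∉ S → Fintype.card V ≤ (G.neighborSet w ∩ U).ncard) →
      ∀ ω ∈ Ω, ∀ φ : V → W, Set.BijOn φ (prevSet ω S.ncard) S →
      (∀ x ∈ prevSet ω S.ncard, ∀ y ∈ prevSet ω S.ncard, H.Adj x y → G.Adj (φ x) (φ y)) →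
      Good H G U S := by
  classical
  intro n
  induction n with
  | zero =>
    intro G U S hn hwc
    have := Set.ncard_le_ncard hwc.1
    omega
  | succ n ih =>
  intro G U S hn hwc hdeg ω hω φ hφ hadj
  by_cases hrig : ∃ A B : Set W, A ∪ B = U ∧ (∀ a ∈ A \ B, ∀ b ∈ B \ A, ¬ G.Adj a b) ∧
      (A \ B).Nonempty ∧ (B \ A).Nonempty ∧ S ⊆ A ∧ (A ∩ B).ncard ≤ S.ncard
  · obtain ⟨A, B, h1, h2, h3, h4, h5, h6⟩ := hrig
    obtain ⟨G', U', S', φ', k1, k2, k3, k4, k5, k6, k7⟩ :=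
      side_step hwc hdeg hφ hadj h1 h2 h3 h4 h5 h6
    rw [← k2] at k5 k6
    exact k7 (ih G' U' S' (by omega) k3 k4 ω hω φ' k5 k6)
  have hSt : S.ncard ≤ Fintype.card V := by
    rw [← hφ.image_eq]
    refine (Set.ncard_image_le (Set.toFinite _)).trans ?_
    exact (Set.ncard_le_card _).trans_eq Nat.card_eq_fintype_card
  rcases hSt.eq_or_lt with hSt | hSt
  · have huniv : prevSet ω S.ncard = Set.univ := by
      ext v
      obtain ⟨i, rfl⟩ := ω.surjective v
      simp [mem_prevSet, hSt]
    rw [huniv] at hφ hadj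
    refine final_step hwc hφ (fun x y h => hadj x trivial y trivial h)
  let s : Fin (Fintype.card V) := ⟨S.ncard, hSt⟩
  have hprev : prevSet ω (S.ncard + 1) = insert (ω s) (prevSet ω S.ncard) := by
    ext v
    obtain ⟨i, rfl⟩ := ω.surjective v
    simp only [mem_prevSet, Set.mem_insert_iff, ω.injective.eq_iff, s, Fin.ext_iff]
    omega
  have hnew : ω s ∉ prevSet ω S.ncard := by simp [mem_prevSet, s]
  have hN : ∀ v, v ∈ nbrs H ω s ↔ v ∈ prevSet ω S.ncard ∧ H.Adj (ω s) v := fun v => Iff.rfl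
  by_cases hext : ∃ v ∈ U, v ∉ S ∧ ∀ a ∈ nbrs H ω s, G.Adj (φ a) v
  · obtain ⟨v, hvU, hvS, hv⟩ := hext
    have hc : (insert v S).ncard = S.ncard + 1 := Set.ncard_insert_of_notMem hvS
    have hφold : ∀ x ∈ prevSet ω S.ncard, Function.update φ (ω s) v x = φ x := fun x hx =>
      Function.update_of_ne (by rintro rfl; exact hnew hx) _ _
    have hφnew : Function.update φ (ω s) v (ω s) = v := Function.update_self _ _ _
    have hgood : Good H G U (insert v S) := by
      refine ih G U (insert v S) (by omega) ⟨Set.insert_subset hvU hwc.1, ?_, ?_⟩ ?_ ω hω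
        (Function.update φ (ω s) v) ?_ ?_
      · by_contra hcon
        push Not at hcon
        have h1 : insert v (G.neighborSet v ∩ U) ⊆ insert v S :=
          Set.insert_subset (Or.inl rfl) fun z hz => hcon z hz.2
        have h2 := Set.ncard_le_ncard h1
        rw [Set.ncard_insert_of_notMem (fun h => G.loopless.irrefl _ h.1), hc] at h2
        have := hdeg v hvU hvS
        omega
      · intro A B hAB hno hA hB hSA
        rw [hc]
        by_contra hcon
        exact hrig ⟨A, B, hAB, hno, hA, hB, (Set.subset_insert _ _).trans hSA, by omega⟩
      · intro w hwU hwS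
        exact hdeg w hwU fun h => hwS (Or.inr h)
      · rw [hc, hprev]
        refine ⟨?_, ?_, ?_⟩
        · rintro x (rfl | hx)
          · rw [hφnew]; exact Or.inl rfl
          · rw [hφold x hx]; exact Or.inr (hφ.mapsTo hx)
        · rintro x (rfl | hx) y (rfl | hy) h
          · rfl
          · rw [hφnew, hφold y hy] at h
            exact absurd (h ▸ hφ.mapsTo hy) hvS
          · rw [hφnew, hφold x hx] at h
            exact absurd (h ▸ hφ.mapsTo hx) hvS
          · rw [hφold x hx, hφold y hy] at h
            exact hφ.injOn hx hy h
        · rintro z (rfl | hz)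
          · exact ⟨ω s, Or.inl rfl, hφnew⟩
          · obtain ⟨x, hx, rfl⟩ := hφ.surjOn hz
            exact ⟨x, Or.inr hx, hφold x hx⟩
      · rw [hc, hprev]
        rintro x (rfl | hx) y (rfl | hy) h
        · exact absurd rfl h.ne
        · rw [hφnew, hφold y hy]
          exact (hv y ((hN y).2 ⟨hy, h⟩)).symm
        · rw [hφnew, hφold x hx]
          exact hv x ((hN x).2 ⟨hx, h.symm⟩)
        · rw [hφold x hx, hφold y hy]
          exact hadj x hx y hy h
    obtain ⟨μ, h1, h2, w, hw, h3⟩ := hgood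
    exact ⟨μ, h1, h2, w, fun h => hw (Or.inr h), h3⟩
  push Not at hext
  obtain ⟨w₀, hw₀, hw₀S⟩ := hwc.2.1
  obtain ⟨a, ha, _⟩ := hext w₀ hw₀ hw₀S
  have hrec := hΩ.2.1 ω hω s
  by_cases hone : ∃ b ∈ nbrs H ω s, a ≠ b
  · obtain ⟨b, hb, hab⟩ := hone
    have hNab : nbrs H ω s = {a, b} := by
      symm
      apply Set.eq_of_subset_of_ncard_le _ _ (Set.toFinite _)
      · rintro c (rfl | rfl)
        · exact ha
        · exact hb
      · rw [Set.ncard_pair hab]; exact hrec.1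
    obtain ⟨ω', hω', ⟨ψ⟩⟩ := hΩ.2.2 ω hω s a ha b hb hab
    obtain ⟨G', U', S', φ', k1, k2, k3, k4, k5, k6, k7⟩ :=
      contract_step_s10 hwc hdeg hφ hadj ha.1 hb.1 (hrec.2 a ha b hb hab) (by
        intro w hwU hwS h1 h2
        obtain ⟨c, hc, hcw⟩ := hext w hwU hwS
        rw [hNab] at hc
        rcases hc with rfl | rfl
        · exact hcw h1
        · exact hcw h2) ψ
    have hs : (s : ℕ) - 1 = S'.ncard := by
      change S.ncard - 1 = _
      omega
    rw [hs] at k5 k6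
    exact k7 (ih G' U' S' (by omega) k3 k4 ω' hω' φ' k5 k6)
  · push Not at hone
    exfalso
    have haS : φ a ∈ S := hφ.mapsTo ha.1
    apply hrig
    refine ⟨S, U \ {φ a}, ?_, ?_, ⟨φ a, haS, fun h => h.2 rfl⟩, ⟨w₀, ⟨hw₀, ?_⟩, hw₀S⟩, subset_rfl,
      Set.ncard_le_ncard Set.inter_subset_left⟩
    · ext z
      simp only [Set.mem_union, Set.mem_sdiff, Set.mem_singleton_iff]
      constructor
      · rintro (h | h)
        · exact hwc.1 h
        · exact h.1
      · intro h
        by_cases hz : z = φ a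
        · left; rw [hz]; exact haS
        · right; exact ⟨h, hz⟩
    · rintro u ⟨huS, hu⟩ v ⟨⟨hvU, _⟩, hvS⟩ huv
      have hua : u = φ a := by
        by_contra h
        exact hu ⟨hwc.1 huS, h⟩
      obtain ⟨c, hc, hcv⟩ := hext v hvU hvS
      rw [← hone c hc, ← hua] at hcv
      exact hcv huv
    · rintro h
      rw [Set.mem_singleton_iff] at h
      exact hw₀S (h ▸ haS)

end Main

/-- Lemma: if `H` has a contractible ordering `Ω`, `S` is well-connected in `G`, every vertex
outside `S` has degree at least `t = |V(H)|`, and `G[S]` contains a spanning subgraph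
isomorphic to `H[ω_{[|S|]}]` for some `ω ∈ Ω`, then `G` contains an `H⁺`-minor whose apex
branch set is a singleton contained in `V(G)∖S`. -/
theorem wellConnected_apex_minor
    {V W : Type*} [Fintype V] [Fintype W]
    (hV : 0 < Fintype.card V)
    (H : SimpleGraph V) (Ω : Set (Fin (Fintype.card V) ≃ V))
    (hΩ : IsContractibleOrdering H Ω)
    (G : SimpleGraph W) (S : Set W) (hwc : WellConnected G S)
    (hdeg : ∀ w ∉ S, Fintype.card V ≤ (G.neighborSet w).ncard)
    (hsp : ∃ ω ∈ Ω, ∃ φ : ↥(prevSet ω S.ncard) ≃ ↥S,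
      ∀ x y : ↥(prevSet ω S.ncard), H.Adj (x : V) (y : V) → G.Adj (φ x : W) (φ y : W)) :
    ∃ μ : Option V → Set W, IsMinorMap G (apexGraph H) μ ∧
      ∃ w : W, w ∉ S ∧ μ none = {w} := by
  classical
  obtain ⟨ω, hω, φ, hφ⟩ := hsp
  obtain ⟨hne, hw⟩ := hwc
  obtain ⟨w₀, hw₀⟩ := (Set.ne_univ_iff_exists_notMem S).1 hne
  let φ' : V → W := fun v => if h : v ∈ prevSet ω S.ncard then φ ⟨v, h⟩ else w₀
  have hφ' : ∀ v (h : v ∈ prevSet ω S.ncard), φ' v = φ ⟨v, h⟩ := fun v h => by simp [φ', h]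
  have hgood : Good H G Set.univ S := by
    refine main_induction H Ω hΩ (2 * (Set.univ : Set W).ncard + 1) G Set.univ S (by omega)
      ⟨Set.subset_univ _, ⟨w₀, trivial, hw₀⟩, ?_⟩ ?_ ω hω φ' ⟨?_, ?_, ?_⟩ ?_
    · intro A B hAB hno hA hB hSA
      by_contra hcon
      exact hw ⟨A, B, ⟨hAB, hno⟩, hA, hB, hSA, by omega⟩
    · intro w _ hwS
      rw [Set.inter_univ]
      exact hdeg w hwS
    · intro v hv
      rw [hφ' v hv]
      exact (φ ⟨v, hv⟩).2
    · intro v hv v' hv' h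
      rw [hφ' v hv, hφ' v' hv'] at h
      exact congrArg Subtype.val (φ.injective (Subtype.ext h))
    · intro z hz
      obtain ⟨⟨v, hv⟩, h⟩ := φ.surjective ⟨z, hz⟩
      exact ⟨v, hv, by rw [hφ' v hv, h]⟩
    · intro x hx y hy hxy
      rw [hφ' x hx, hφ' y hy]
      exact hφ ⟨x, hx⟩ ⟨y, hy⟩ hxy
  obtain ⟨μ, h1, _, h3⟩ := hgood
  exact ⟨μ, h1, h3⟩
end
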